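/- Let n and k be positive integers and let λ = (λ₁, λ₂, …, λ_m) be a partition of n with n ≥ k + λ₂. Then the number of Kronecker tableaux of length k, initial shape (n) and final shape λ equals the number of pairs (T, π) where T is a partial standard tableau of shape λ̄ with labels in {1, …, k} and π is a permutation of {1, …, k} such that: every non-trivial cycle of π is decreasing, every fixed point of π is a label of a cell of T, and every label of T is the greatest element of its cycle in π. -/

import Mathlib

open Finset

namespace KroneckerPaper

/-- A (removable) corner of a Young diagram: a cell with no cell below it nor to its right
(in English notation; equivalently, in French notation, a cell at the right end of its row
with no cell above it). -/
def IsCorner (μ : YoungDiagram) (c : ℕ × ℕ) : Prop :=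
  c ∈ μ ∧ (c.1 + 1, c.2) ∉ μ ∧ (c.1, c.2 + 1) ∉ μ

/-- The *first corner* of a Young diagram: the unique corner lying on a row of maximal
length. -/
def IsFirstCorner (μ : YoungDiagram) (c : ℕ × ℕ) : Prop :=
  IsCorner μ c ∧ μ.rowLen c.1 = μ.rowLen 0

/-- `μ'` is obtained from `μ` by adding one new cell which is a corner of `μ'`. -/
def AddCorner (μ μ' : YoungDiagram) : Prop :=
  ∃ c, IsCorner μ' c ∧ c ∉ μ.cells ∧ μ'.cells = insert c μ.cells

/-- `μ'` is obtained from `μ` by removing one corner of `μ`. -/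
def RemoveCorner (μ μ' : YoungDiagram) : Prop :=
  ∃ c, IsCorner μ c ∧ μ'.cells = μ.cells.erase c

/-- `μ' ≠ μ` *differs from `μ` by the position of a corner*: it is obtained from `μ` by
removing a corner of `μ` and adding a new cell which is a corner of `μ'`. -/
def MoveCorner (μ μ' : YoungDiagram) : Prop :=
  μ' ≠ μ ∧ ∃ c c', IsCorner μ c ∧ IsCorner μ' c' ∧ c' ∉ μ.cells.erase c ∧
    μ'.cells = insert c' (μ.cells.erase c)

/-- The one-row Young diagram `(n)`. -/
def rowDiagram (n : ℕ) : YoungDiagram :=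
  YoungDiagram.ofRowLens [n] (List.pairwise_singleton _ n).sortedGE

/-- The Young diagram obtained by deleting the first (longest) row, i.e. the truncated
partition `λ̄ = (λ₂, …, λ_m)` of `λ = (λ₁, λ₂, …, λ_m)`. -/
def truncate (μ : YoungDiagram) : YoungDiagram where
  cells := (μ.cells.filter fun c => 1 ≤ c.1).image fun c => (c.1 - 1, c.2)
  isLowerSet := by
    rintro ⟨i1, j1⟩ ⟨i2, j2⟩ ⟨hi, hj⟩ h
    simp only [Finset.coe_image, Finset.coe_filter, Set.mem_image, Set.mem_setOf_eq,
      Finset.mem_coe, YoungDiagram.mem_cells] at h ⊢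
    obtain ⟨⟨a, b⟩, ⟨ha, ha1⟩, heq⟩ := h
    simp only [Prod.mk.injEq] at heq
    exact ⟨(i2 + 1, j2), ⟨μ.up_left_mem (by omega) (by omega) ha, by omega⟩, by simp⟩

/-- A *Kronecker tableau* of length `k`, initial shape `μ` and final shape `lam`:
a sequence `μ⁰ = μ, μ¹, …, μ^k = lam` of diagrams such that each `μ^{i+1}` either differs
from `μ^i` by the position of a corner, or equals `μ^i` together with the datum of a
distinguished corner of `μ^{i+1}` other than its first corner. -/
structure KroneckerTableau (k : ℕ) (μ lam : YoungDiagram) where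
  seq : Fin (k + 1) → YoungDiagram
  dist : Fin k → Option (ℕ × ℕ)
  init : seq 0 = μ
  final : seq (Fin.last k) = lam
  step : ∀ i : Fin k,
    (MoveCorner (seq i.castSucc) (seq i.succ) ∧ dist i = none) ∨
    (seq i.succ = seq i.castSucc ∧
      ∃ c, dist i = some c ∧ IsCorner (seq i.succ) c ∧ ¬ IsFirstCorner (seq i.succ) c)

/-- A *partial standard tableau* of shape `α` with labels in `{1, …, k}`: a labelling of the
cells of `α` by pairwise distinct integers of `{1, …, k}` increasing along rows and columns
(cells outside `α` are labelled `0` by convention). -/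
structure PartialST (α : YoungDiagram) (k : ℕ) where
  label : ℕ × ℕ → ℕ
  mem_of_cell : ∀ c ∈ α, label c ∈ Finset.Icc 1 k
  zero_of_not_cell : ∀ c, c ∉ α → label c = 0
  injOn : ∀ c ∈ α, ∀ c' ∈ α, label c = label c' → c = c'
  row_incr : ∀ i j1 j2 : ℕ, j1 < j2 → (i, j2) ∈ α → label (i, j1) < label (i, j2)
  col_incr : ∀ i1 i2 j : ℕ, i1 < i2 → (i2, j) ∈ α → label (i1, j) < label (i2, j)

/-- `f^α`, the number of standard Young tableaux of shape `α`. -/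
noncomputable def fSYT (α : YoungDiagram) : ℕ :=
  Nat.card (PartialST α α.card)

/-- `p₂ n k`: the number of partitions of an `n`-element set into exactly `k` blocks, each of
size at least `2` (associated Stirling numbers of the second kind). -/
noncomputable def p2 (n k : ℕ) : ℕ :=
  Nat.card {P : Finpartition (Finset.univ : Finset (Fin n)) //
    P.parts.card = k ∧ ∀ b ∈ P.parts, 2 ≤ b.card}

/-- Every non-trivial cycle of `π` is *decreasing*: `π x < x` for every element `x` of a
non-trivial cycle which is not the minimum of its cycle. -/
def DecCycles {S : Type*} [LinearOrder S] (π : Equiv.Perm S) : Prop :=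
  ∀ x, π x ≠ x → (∃ y, π.SameCycle x y ∧ y < x) → π x < x

/-- A pair `(T, π)` of a partial standard tableau of shape `α` with labels in `{1, …, k}`
and a permutation `π` of `{1, …, k}` all of whose non-trivial cycles are decreasing, such
that every fixed point of `π` is a label of `T` and every label of `T` is the greatest
element of its cycle in `π`. -/
structure TabPerm (k : ℕ) (α : YoungDiagram) where
  T : PartialST α k
  π : Equiv.Perm ℕ
  perm_of : ∀ x : ℕ, x ∉ Finset.Icc 1 k → π x = x
  dec : DecCycles π
  fix_mem : ∀ x ∈ Finset.Icc 1 k, π x = x → ∃ c ∈ α, T.label c = x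
  label_max : ∀ c ∈ α, ∀ y : ℕ, π.SameCycle (T.label c) y → y ≤ T.label c

/-!
Deleting the first row turns a Kronecker tableau into a walk on Young's lattice. As long as the
first row is long enough, which is what `k + λ₂ ≤ n` guarantees, one step of this walk is one
application of the operator `U + D + U D`, where `U` adds a corner and `D` removes one.

On the other side, only the set of labels of `T` interacts with `π`, so the number of pairs
`(T, π)` is `f^α` times a number depending on `k` and `|α|` alone. A permutation with decreasing
cycles is a set partition, so inserting the label `k + 1` gives a recursion for that number, and
the relation `D U - U D = 1` turns it into the recursion of the walk.
-/

section YoungLattice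

variable {α β γ μ : YoungDiagram} {c : ℕ × ℕ}

theorem mem_range_card_of_mem (hc : c ∈ μ) : c ∈ range μ.card ×ˢ range μ.card := by
  have hrow : μ.rowLen c.1 ≤ μ.card :=
    μ.rowLen_eq_card ▸ card_le_card (filter_subset _ _)
  have hcol : μ.colLen c.2 ≤ μ.card :=
    μ.colLen_eq_card ▸ card_le_card (filter_subset _ _)
  rw [mem_product, mem_range, mem_range]
  exact ⟨(YoungDiagram.mem_iff_lt_colLen.1 hc).trans_le hcol,
    (YoungDiagram.mem_iff_lt_rowLen.1 hc).trans_le hrow⟩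

theorem finite_setOf_card_le (N : ℕ) : {μ : YoungDiagram | μ.card ≤ N}.Finite := by
  have hinj : Function.Injective YoungDiagram.cells := fun _ _ => YoungDiagram.ext
  refine ((range N ×ˢ range N).powerset.finite_toSet.preimage hinj.injOn).subset fun μ hμ => ?_
  rw [Set.mem_preimage, mem_coe, mem_powerset]
  refine fun c hc => product_subset_product ?_ ?_ (mem_range_card_of_mem hc) <;>
    exact range_subset_range.2 hμ

/-- The Young diagrams with `N` cells, as a `Finset`. -/
noncomputable def diagramsOfCard (N : ℕ) : Finset YoungDiagram :=
  ((finite_setOf_card_le N).subset fun _ h => le_of_eq h :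
    {μ : YoungDiagram | μ.card = N}.Finite).toFinset

@[simp]
theorem mem_diagramsOfCard {N : ℕ} : μ ∈ diagramsOfCard N ↔ μ.card = N := by
  simp [diagramsOfCard]

theorem isCorner_iff_maximal : IsCorner α c ↔ Maximal (· ∈ α) c := by
  refine ⟨fun ⟨hc, hbelow, hright⟩ => ⟨hc, fun d hd hcd => ?_⟩, fun h => ⟨h.prop, ?_, ?_⟩⟩
  · have hd1 : ¬ c.1 < d.1 := fun h => hbelow (α.up_left_mem h hcd.2 hd)
    have hd2 : ¬ c.2 < d.2 := fun h => hright (α.up_left_mem hcd.1 h hd)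
    exact ⟨not_lt.1 hd1, not_lt.1 hd2⟩
  · exact fun hd => absurd (h.2 hd ⟨Nat.le_succ _, le_rfl⟩).1 (by simp)
  · exact fun hd => absurd (h.2 hd ⟨le_rfl, Nat.le_succ _⟩).2 (by simp)

theorem isCorner_iff_rowLen :
    IsCorner α c ↔ c.2 + 1 = α.rowLen c.1 ∧ α.rowLen (c.1 + 1) < α.rowLen c.1 := by
  rw [IsCorner, show c = (c.1, c.2) from rfl]
  simp only [YoungDiagram.mem_iff_lt_rowLen]
  omega

/-- The diagram obtained from `α` by removing the corner `c`. -/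
def eraseCell (α : YoungDiagram) (c : ℕ × ℕ) (hc : IsCorner α c) : YoungDiagram where
  cells := α.cells.erase c
  isLowerSet := by
    rw [coe_erase]
    exact α.isLowerSet.erase fun d hd hcd => ((isCorner_iff_maximal.1 hc).eq_of_le hd hcd).symm

/-- The diagram obtained from `α` by adding the outer corner `c`. -/
def insertCell (α : YoungDiagram) (c : ℕ × ℕ) (hc : ∀ d < c, d ∈ α) : YoungDiagram where
  cells := insert c α.cells
  isLowerSet := by
    intro a b hba ha
    simp only [mem_coe, mem_insert, YoungDiagram.mem_cells] at ha ⊢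
    rcases ha with rfl | ha
    · exact hba.eq_or_lt.imp_right (hc b)
    · exact .inr (α.isLowerSet hba ha)

theorem covBy_iff_cells : β ⋖ α ↔ β.cells ⋖ α.cells := by
  refine ⟨fun h => ?_, fun h => ⟨YoungDiagram.cells_ssubset_iff.1 h.lt, fun γ hβγ hγα =>
    h.2 (YoungDiagram.cells_ssubset_iff.2 hβγ) (YoungDiagram.cells_ssubset_iff.2 hγα)⟩⟩
  have hlt := YoungDiagram.cells_ssubset_iff.2 h.lt
  obtain ⟨c, hc⟩ := exists_minimal (sdiff_nonempty.2 hlt.not_subset)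
  obtain ⟨hcα, hcβ⟩ := mem_sdiff.1 hc.prop
  have hbelow : ∀ d < c, d ∈ β := fun d hdc => by
    by_contra hdβ
    exact hc.not_prop_of_lt hdc (mem_sdiff.2 ⟨α.isLowerSet hdc.le hcα, hdβ⟩)
  have hβ : β ≤ insertCell β c hbelow := YoungDiagram.cells_subset_iff.1 (subset_insert c _)
  have hα : insertCell β c hbelow ≤ α :=
    YoungDiagram.cells_subset_iff.1 (insert_subset hcα hlt.subset)
  rcases h.eq_or_eq hβ hα with heq | heq
  · exact absurd (heq ▸ mem_insert_self c β.cells) hcβ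
  · exact heq ▸ covBy_insert hcβ

theorem covBy_iff_removeCorner : β ⋖ α ↔ RemoveCorner α β := by
  refine ⟨fun h => ?_, fun ⟨c, hc, hβ⟩ => covBy_iff_cells.2 (hβ ▸ erase_covBy hc.1)⟩
  obtain ⟨c, hc, hβ⟩ := (covBy_iff_cells.1 h).exists_finset_erase
  refine ⟨c, isCorner_iff_maximal.2 ⟨hc, fun d hd hcd => ?_⟩, hβ.symm⟩
  by_contra hdc
  have hdβ : d ∈ β.cells := hβ ▸ mem_erase.2 ⟨fun h => hdc h.le, hd⟩
  exact notMem_erase c α.cells (hβ ▸ β.isLowerSet hcd hdβ)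

theorem card_add_one_of_covBy (h : β ⋖ α) : β.card + 1 = α.card :=
  Nat.covBy_iff_add_one_eq.1 (covBy_iff_cells.1 h).card_finset

theorem covBy_iff_card : β ⋖ α ↔ β ≤ α ∧ β.card + 1 = α.card := by
  refine ⟨fun h => ⟨h.le, card_add_one_of_covBy h⟩, fun ⟨hle, hcard⟩ => covBy_iff_cells.2 ?_⟩
  have hsub := YoungDiagram.cells_subset_iff.2 hle
  refine covBy_iff_card_sdiff_eq_one.2 ⟨hsub, ?_⟩
  rw [card_sdiff_of_subset hsub]
  change β.cells.card + 1 = α.cells.card at hcard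
  omega

theorem eraseCell_covBy (hc : IsCorner α c) : eraseCell α c hc ⋖ α :=
  covBy_iff_removeCorner.2 ⟨c, hc, rfl⟩

theorem covBy_insertCell (hc : ∀ d < c, d ∈ α) (hcα : c ∉ α) : α ⋖ insertCell α c hc :=
  covBy_iff_cells.2 (covBy_insert hcα)

theorem finite_setOf_covBy_left (α : YoungDiagram) : {β | β ⋖ α}.Finite :=
  (finite_setOf_card_le α.card).subset fun _ h => (card_add_one_of_covBy h) ▸ Nat.le_succ _

theorem finite_setOf_covBy_right (α : YoungDiagram) : {γ | α ⋖ γ}.Finite :=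
  (finite_setOf_card_le (α.card + 1)).subset fun _ h => (card_add_one_of_covBy h).ge

/-- The diagrams obtained from `α` by removing a corner. -/
noncomputable def lowerCovers (α : YoungDiagram) : Finset YoungDiagram :=
  (finite_setOf_covBy_left α).toFinset

/-- The diagrams obtained from `α` by adding a corner. -/
noncomputable def upperCovers (α : YoungDiagram) : Finset YoungDiagram :=
  (finite_setOf_covBy_right α).toFinset

@[simp]
theorem mem_lowerCovers : β ∈ lowerCovers α ↔ β ⋖ α := by
  simp [lowerCovers]

@[simp]
theorem mem_upperCovers : γ ∈ upperCovers α ↔ α ⋖ γ := by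
  simp [upperCovers]

open scoped Classical in
/-- The corners of `α`, as a `Finset`. -/
noncomputable def corners (α : YoungDiagram) : Finset (ℕ × ℕ) :=
  α.cells.filter (IsCorner α)

@[simp]
theorem mem_corners : c ∈ corners α ↔ IsCorner α c := by
  simpa [corners] using fun h : IsCorner α c => h.1

theorem sum_lowerCovers {M : Type*} [AddCommMonoid M] (α : YoungDiagram) (F : YoungDiagram → M) :
    ∑ β ∈ lowerCovers α, F β = ∑ c : corners α, F (eraseCell α c (mem_corners.1 c.2)) := by
  symm
  refine sum_bij (fun c _ => eraseCell α c (mem_corners.1 c.2)) ?_ ?_ ?_ fun _ _ => rfl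
  · exact fun c _ => mem_lowerCovers.2 (eraseCell_covBy _)
  · intro c _ d _ h
    exact Subtype.ext (erase_injOn α.cells (mem_corners.1 c.2).1 (mem_corners.1 d.2).1
      (congrArg YoungDiagram.cells h))
  · intro β hβ
    obtain ⟨c, hc, hcells⟩ := covBy_iff_removeCorner.1 (mem_lowerCovers.1 hβ)
    exact ⟨⟨c, mem_corners.2 hc⟩, mem_univ _, YoungDiagram.ext hcells.symm⟩

theorem card_lowerCovers (α : YoungDiagram) : (lowerCovers α).card = (corners α).card := by
  rw [card_eq_sum_ones, sum_lowerCovers, sum_const, card_univ, Fintype.card_coe, smul_eq_mul,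
    mul_one]

theorem forall_lt_rowEnd_mem {i : ℕ} (hi : i = 0 ∨ α.rowLen i < α.rowLen (i - 1)) :
    ∀ d < (i, α.rowLen i), d ∈ α := by
  rintro ⟨a, b⟩ hd
  rw [YoungDiagram.mem_iff_lt_rowLen]
  obtain ⟨ha, hb⟩ := Prod.mk_le_mk.1 hd.le
  rcases ha.lt_or_eq with hai | rfl
  · have := α.rowLen_anti a (i - 1) (by omega)
    omega
  · exact hb.lt_of_ne fun hb => hd.ne (by rw [hb])

theorem exists_rowEnd_of_covBy (h : α ⋖ γ) : ∃ i, (i = 0 ∨ α.rowLen i < α.rowLen (i - 1)) ∧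
    γ.cells = insert (i, α.rowLen i) α.cells := by
  obtain ⟨⟨i, j⟩, hc, hγ⟩ := (covBy_iff_cells.1 h).exists_finset_insert
  have hlower : ∀ d < (i, j), d ∈ α := fun d hd =>
    mem_of_mem_insert_of_ne (hγ ▸ γ.isLowerSet hd.le (hγ ▸ mem_insert_self _ _)) hd.ne
  have hj : α.rowLen i = j := by
    refine le_antisymm (not_lt.1 fun hlt => hc (YoungDiagram.mem_iff_lt_rowLen.2 hlt)) ?_
    rcases j with _ | j
    · exact Nat.zero_le _
    · exact YoungDiagram.mem_iff_lt_rowLen.1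
        (hlower (i, j) (Prod.mk_lt_mk_iff_right.2 j.lt_succ_self))
  refine ⟨i, or_iff_not_imp_left.2 fun hi => ?_, hj ▸ hγ.symm⟩
  rw [hj, ← YoungDiagram.mem_iff_lt_rowLen]
  exact hlower _ (Prod.mk_lt_mk_iff_left.2 (by omega))

theorem card_upperCovers (α : YoungDiagram) :
    (upperCovers α).card = (lowerCovers α).card + 1 := by
  have hrow : Set.InjOn (fun c : ℕ × ℕ => c.1 + 1) (corners α) := by
    intro c hc d hd hcd
    have h1 : c.1 = d.1 := Nat.succ_injective hcd
    have hc2 := (isCorner_iff_rowLen.1 (mem_corners.1 hc)).1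
    have hd2 := (isCorner_iff_rowLen.1 (mem_corners.1 hd)).1
    exact Prod.ext h1 (by rw [h1] at hc2; omega)
  have hmem : ∀ i, i ∈ insert 0 ((corners α).image fun c => c.1 + 1) ↔
      i = 0 ∨ α.rowLen i < α.rowLen (i - 1) := by
    intro i
    rw [mem_insert, mem_image]
    refine or_congr_right' fun hi => ⟨?_, fun h => ?_⟩
    · rintro ⟨c, hc, rfl⟩
      exact (isCorner_iff_rowLen.1 (mem_corners.1 hc)).2
    · refine ⟨(i - 1, α.rowLen (i - 1) - 1), ?_, by simp only; omega⟩
      rw [mem_corners, isCorner_iff_rowLen]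
      simp only [show i - 1 + 1 = i by omega]
      omega
  rw [card_lowerCovers, ← card_image_of_injOn hrow,
    ← card_insert_of_notMem (a := 0) (by simp)]
  symm
  refine card_bij (fun i hi => insertCell α _ (forall_lt_rowEnd_mem ((hmem i).1 hi))) ?_ ?_ ?_
  · refine fun i _ => mem_upperCovers.2 (covBy_insertCell _ ?_)
    simp [YoungDiagram.mem_iff_lt_rowLen]
  · intro i _ i' _ h
    have hi : (i, α.rowLen i) ∉ α.cells := by simp [YoungDiagram.mem_iff_lt_rowLen]
    exact congrArg Prod.fst ((insert_inj hi).1 (congrArg YoungDiagram.cells h))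
  · intro γ hγ
    obtain ⟨i, hi, hcells⟩ := exists_rowEnd_of_covBy (mem_upperCovers.1 hγ)
    exact ⟨i, (hmem i).2 hi, YoungDiagram.ext hcells.symm⟩

open scoped Classical in
theorem sum_upperCovers_sum_erase {M : Type*} [AddCommMonoid M] (F : YoungDiagram → M)
    (α : YoungDiagram) :
    ∑ γ ∈ upperCovers α, ∑ δ ∈ (lowerCovers γ).erase α, F δ =
      ∑ β ∈ lowerCovers α, ∑ δ ∈ (upperCovers β).erase α, F δ := by
  rw [sum_sigma', sum_sigma']
  refine sum_bij' (fun p _ => ⟨α ⊓ p.2, p.2⟩) (fun p _ => ⟨α ⊔ p.2, p.2⟩) ?_ ?_ ?_ ?_ ?_ <;>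
    rintro ⟨ε, δ⟩ h <;>
    simp only [mem_sigma, mem_upperCovers, mem_erase, mem_lowerCovers] at h ⊢ <;>
    obtain ⟨hα, hne, hδ⟩ := h
  · have hsup : α ⊔ δ = ε := hα.wcovBy.sup_eq hδ.wcovBy hne.symm
    exact ⟨inf_covBy_of_covBy_sup_right (hsup ▸ hδ), hne, inf_covBy_of_covBy_sup_left (hsup ▸ hα)⟩
  · have hinf : α ⊓ δ = ε := hα.wcovBy.inf_eq hδ.wcovBy hne.symm
    exact ⟨covBy_sup_of_inf_covBy_right (hinf ▸ hδ), hne, covBy_sup_of_inf_covBy_left (hinf ▸ hα)⟩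
  · rw [hα.wcovBy.sup_eq hδ.wcovBy hne.symm]
  · rw [hα.wcovBy.inf_eq hδ.wcovBy hne.symm]

/-- The relation `DU - UD = 1` of Young's lattice. -/
theorem sum_upperCovers_sum_lowerCovers {M : Type*} [AddCommMonoid M] (F : YoungDiagram → M)
    (α : YoungDiagram) :
    ∑ γ ∈ upperCovers α, ∑ δ ∈ lowerCovers γ, F δ =
      F α + ∑ β ∈ lowerCovers α, ∑ δ ∈ upperCovers β, F δ := by
  classical
  have hdown : ∀ γ ∈ upperCovers α,
      ∑ δ ∈ lowerCovers γ, F δ = F α + ∑ δ ∈ (lowerCovers γ).erase α, F δ := fun γ hγ =>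
    (add_sum_erase _ F (by simpa using hγ)).symm
  have hup : ∀ β ∈ lowerCovers α,
      ∑ δ ∈ upperCovers β, F δ = F α + ∑ δ ∈ (upperCovers β).erase α, F δ := fun β hβ =>
    (add_sum_erase _ F (by simpa using hβ)).symm
  rw [sum_congr rfl hdown, sum_congr rfl hup, sum_add_distrib, sum_add_distrib,
    sum_upperCovers_sum_erase, sum_const, sum_const, card_upperCovers, succ_nsmul',
    add_assoc]

open scoped Classical in
/-- The number of saturated chains of length `m` from `∅` to `α` in Young's lattice. It vanishes
unless `m = |α|`, where it is the number `f^α` of standard tableaux of shape `α`. -/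
noncomputable def chainCount : ℕ → YoungDiagram → ℕ
  | 0, α => if α = ⊥ then 1 else 0
  | m + 1, α => ∑ β ∈ lowerCovers α, chainCount m β

theorem sum_upperCovers_chainCount (m : ℕ) (α : YoungDiagram) :
    ∑ γ ∈ upperCovers α, chainCount (m + 1) γ = (m + 1) * chainCount m α := by
  simp only [chainCount]
  rw [sum_upperCovers_sum_lowerCovers]
  induction m generalizing α with
  | zero =>
    have hzero : ∀ β ∈ lowerCovers α, ∑ δ ∈ upperCovers β, chainCount 0 δ = 0 := fun β _ =>
      sum_eq_zero fun δ hδ => if_neg (bot_le.trans_lt (mem_upperCovers.1 hδ).lt).ne'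
    rw [sum_eq_zero hzero, add_zero, zero_add, one_mul]
  | succ m ih =>
    have hstep : ∀ β ∈ lowerCovers α,
        ∑ δ ∈ upperCovers β, chainCount (m + 1) δ = (m + 1) * chainCount m β := fun β _ => by
      simp only [chainCount]
      rw [sum_upperCovers_sum_lowerCovers, ih]
    rw [sum_congr rfl hstep, ← mul_sum, chainCount]
    ring

end YoungLattice

section LabelledPermutations

variable {ι : Type*}

theorem rel_of_sameCycle {f : Equiv.Perm ι} (r : Setoid ι) (h : ∀ y, r (f y) y) {a b : ι}
    (hab : f.SameCycle a b) : r a b := by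
  obtain ⟨i, rfl⟩ := hab
  induction i using Int.induction_on with
  | zero => exact r.refl a
  | succ i ih =>
    rw [add_comm, zpow_add, zpow_one]
    exact r.trans ih (r.symm (h _))
  | pred i ih =>
    rw [sub_eq_neg_add, zpow_add, zpow_neg_one]
    have hpre := h (f⁻¹ ((f ^ (-i : ℤ)) a))
    rw [Equiv.Perm.inv_def, Equiv.apply_symm_apply] at hpre
    exact r.trans ih hpre

theorem swap_mul_apply_of_ne [DecidableEq ι] {ρ : Equiv.Perm ι} {N x y : ι} (hN : ρ N = N)
    (hy : y ≠ N) (hyx : ρ y ≠ x) : (Equiv.swap x N * ρ) y = ρ y :=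
  Equiv.swap_apply_of_ne_of_ne hyx fun h => hy (ρ.injective (h.trans hN.symm))

theorem sameCycle_swap_mul_iff [DecidableEq ι] {ρ : Equiv.Perm ι} {N x y z : ι} (hN : ρ N = N)
    (hy : y ≠ N) (hz : z ≠ N) :
    (Equiv.swap x N * ρ).SameCycle y z ↔ ρ.SameCycle y z := by
  constructor
  · -- Contracting `N` to `x` turns every cycle of `swap x N * ρ` into a cycle of `ρ`.
    let contract : ι → ι := Function.update id N x
    have hcontract : ∀ {u}, u ≠ N → contract u = u := fun hu => Function.update_of_ne hu _ _
    have hcontractN : contract N = x := Function.update_self _ _ _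
    have hx : contract x = x := by
      by_cases hxN : x = N
      · rw [hxN, hcontractN, hxN]
      · exact hcontract hxN
    intro h
    have hrel := rel_of_sameCycle ((Equiv.Perm.SameCycle.setoid ρ).comap contract) (fun u => ?_) h
    · rwa [Setoid.comap_rel, hcontract hy, hcontract hz] at hrel
    change ρ.SameCycle (contract _) (contract _)
    rw [Equiv.Perm.mul_apply]
    by_cases hu : u = N
    · rw [hu, hN, Equiv.swap_apply_right, hx, hcontractN]
    · by_cases hux : ρ u = x
      · rw [hux, Equiv.swap_apply_left, hcontractN, hcontract hu, ← hux]
        exact Equiv.Perm.sameCycle_apply_left.2 (.refl _ _)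
      · have hρu : ρ u ≠ N := fun h => hu (ρ.injective (h.trans hN.symm))
        rw [Equiv.swap_apply_of_ne_of_ne hux hρu, hcontract hρu, hcontract hu]
        exact Equiv.Perm.sameCycle_apply_left.2 (.refl _ _)
  · refine rel_of_sameCycle (Equiv.Perm.SameCycle.setoid (Equiv.swap x N * ρ)) fun u => ?_
    change (Equiv.swap x N * ρ).SameCycle (ρ u) u
    by_cases hu : u = N
    · rw [hu, hN]
    · rw [← Equiv.Perm.sameCycle_apply_right]
      by_cases hux : ρ u = x
      · rw [Equiv.Perm.mul_apply, hux, Equiv.swap_apply_left, ← Equiv.Perm.sameCycle_apply_right,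
          Equiv.Perm.mul_apply, hN, Equiv.swap_apply_right]
      · rw [swap_mul_apply_of_ne hN hu hux]

variable [LinearOrder ι] {s L : Finset ι} {π ρ : Equiv.Perm ι} {N x : ι} {m : ℕ}

theorem finite_setOf_sameCycle (hπ : ∀ y ∉ s, π y = y) (x : ι) :
    {y | π.SameCycle x y}.Finite := by
  refine (insert x s).finite_toSet.subset fun y hy => ?_
  rw [mem_coe, mem_insert, or_iff_not_imp_right]
  exact fun hys => hy.symm.eq_of_left (hπ y hys)

theorem exists_min_sameCycle (hπ : ∀ y ∉ s, π y = y) (x : ι) :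
    ∃ y, π.SameCycle x y ∧ ∀ z, π.SameCycle x z → y ≤ z :=
  Set.exists_min_image _ id (finite_setOf_sameCycle hπ x) ⟨x, Equiv.Perm.SameCycle.refl _ _⟩

theorem exists_max_sameCycle (hπ : ∀ y ∉ s, π y = y) (x : ι) :
    ∃ y, π.SameCycle x y ∧ ∀ z, π.SameCycle x z → z ≤ y :=
  Set.exists_max_image _ id (finite_setOf_sameCycle hπ x) ⟨x, Equiv.Perm.SameCycle.refl _ _⟩

/-- The pairs `(π, L)` counted by the theorem, with the label set `L` of `T` in place of `T`: `π`
is a permutation of `s` with decreasing cycles, its fixed points in `s` belong to `L`, and every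
element of `L` is the greatest of its cycle. Call `y` a weak excedance if `y ≤ π y`. The minimum of
a cycle always is one, so a cycle is decreasing or trivial exactly when it has no other; its maximum
is then the image of the weak excedance. -/
structure IsLabelledPerm (s : Finset ι) (π : Equiv.Perm ι) (L : Finset ι) : Prop where
  apply_of_notMem : ∀ y ∉ s, π y = y
  eq_of_le_apply : ∀ y z, π.SameCycle y z → y ≤ π y → z ≤ π z → y = z
  subset : L ⊆ s
  mem_of_fixed : ∀ y ∈ s, π y = y → y ∈ L
  le_of_apply_mem : ∀ y, π y ∈ L → y ≤ π y

theorem decCycles_iff_eq_of_le_apply (hπ : ∀ y ∉ s, π y = y) :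
    DecCycles π ↔ ∀ y z, π.SameCycle y z → y ≤ π y → z ≤ π z → y = z := by
  constructor
  · intro hdec y z hyz hy hz
    have hmin : ∀ {u v}, π.SameCycle u v → u ≤ π u → u ≤ v := by
      intro u v huv hu
      by_contra! hvu
      refine (hdec u (fun hfix => ?_) ⟨v, huv, hvu⟩).not_ge hu
      exact hvu.ne (huv.eq_of_left hfix).symm
    exact le_antisymm (hmin hyz hy) (hmin hyz.symm hz)
  · rintro huniq x - ⟨y, hxy, hyx⟩
    by_contra! hx
    obtain ⟨w, hxw, hmin⟩ := exists_min_sameCycle hπ x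
    have hw : w ≤ π w := hmin _ (Equiv.Perm.sameCycle_apply_right.2 hxw)
    exact ((hmin y hxy).trans_lt hyx).ne' (huniq x w hxw hx hw)

theorem forall_sameCycle_le_iff (hπ : ∀ y ∉ s, π y = y)
    (huniq : ∀ y z, π.SameCycle y z → y ≤ π y → z ≤ π z → y = z) (y : ι) :
    (∀ z, π.SameCycle (π y) z → z ≤ π y) ↔ y ≤ π y := by
  refine ⟨fun h => h y (Equiv.Perm.sameCycle_apply_left.2 (.refl _ _)), fun hy => ?_⟩
  obtain ⟨M, hM, hmax⟩ := exists_max_sameCycle hπ (π y)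
  obtain ⟨w, rfl⟩ := π.surjective M
  have hyw : π.SameCycle y w := by simpa using hM
  have hwM : w ≤ π w := hmax w (by simpa using hyw)
  rwa [huniq y w hyw hy hwM] at hmax ⊢

theorem IsLabelledPerm.insert_iff_of_fixed (hs : ∀ y ∈ s, y < N) (hπN : π N = N) :
    IsLabelledPerm (insert N s) π L ↔ N ∈ L ∧ IsLabelledPerm s π (L.erase N) := by
  have hNs : N ∉ s := fun h => (hs N h).false
  constructor
  · intro h
    refine ⟨h.mem_of_fixed N (mem_insert_self _ _) hπN, fun y hy => ?_, h.eq_of_le_apply,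
      subset_insert_iff.1 h.subset, fun y hy hfix => ?_, fun y hy => ?_⟩
    · by_cases hyN : y = N
      · rwa [hyN]
      · exact h.apply_of_notMem y (by simp [hyN, hy])
    · exact mem_erase.2 ⟨fun hyN => hNs (hyN ▸ hy),
        h.mem_of_fixed y (mem_insert_of_mem hy) hfix⟩
    · exact h.le_of_apply_mem y (mem_of_mem_erase hy)
  · rintro ⟨hNL, h⟩
    refine ⟨fun y hy => h.apply_of_notMem y fun hys => hy (mem_insert_of_mem hys),
      h.eq_of_le_apply, subset_insert_iff.2 h.subset, fun y hy hfix => ?_, fun y hy => ?_⟩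
    · rcases mem_insert.1 hy with rfl | hy
      · exact hNL
      · exact mem_of_mem_erase (h.mem_of_fixed y hy hfix)
    · by_cases hyN : π y = N
      · rw [π.injective (hyN.trans hπN.symm), hπN]
      · exact h.le_of_apply_mem y (mem_erase.2 ⟨hyN, hy⟩)

theorem le_swap_mul_apply_iff (hxN : x < N) (hρN : ρ N = N) {y : ι} (hyN : y ≠ N)
    (hx : ρ y = x → y ≤ x) : y ≤ (Equiv.swap x N * ρ) y ↔ y ≤ ρ y := by
  by_cases hyx : ρ y = x
  · rw [Equiv.Perm.mul_apply, hyx, Equiv.swap_apply_left]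
    exact iff_of_true ((hx hyx).trans hxN.le) (hx hyx)
  · rw [swap_mul_apply_of_ne hρN hyN hyx]

theorem le_of_swap_mul_unique (hs : ∀ y ∈ s, y < N) (hρ : ∀ y ∉ s, ρ y = y) (hx : x ∈ s)
    (huniq : ∀ y z, (Equiv.swap x N * ρ).SameCycle y z → y ≤ (Equiv.swap x N * ρ) y →
      z ≤ (Equiv.swap x N * ρ) z → y = z) {y : ι} (hyx : ρ y = x) : y ≤ x := by
  have hρN : ρ N = N := hρ N fun h => (hs N h).false
  have hys : y ∈ s := by
    by_contra hys
    exact hys (((hρ y hys).symm.trans hyx) ▸ hx)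
  have hyN : y < N := hs y hys
  obtain ⟨w, hyw, hmin⟩ := exists_min_sameCycle hρ y
  have hw : w ≤ ρ w := hmin _ (Equiv.Perm.sameCycle_apply_right.2 hyw)
  by_cases hwx : ρ w = x
  · rwa [ρ.injective (hyx.trans hwx.symm), ← hwx]
  have hwN : w ≠ N := ((hmin y (.refl _ _)).trans_lt hyN).ne
  have heq : y = w := by
    refine huniq y w ((sameCycle_swap_mul_iff hρN hyN.ne hwN).2 hyw) ?_ ?_
    · rw [Equiv.Perm.mul_apply, hyx, Equiv.swap_apply_left]
      exact hyN.le
    · rwa [swap_mul_apply_of_ne hρN hwN hwx]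
  exact absurd (heq ▸ hyx) hwx

theorem IsLabelledPerm.of_swap_mul (hs : ∀ y ∈ s, y < N) (hρN : ρ N = N) (hx : x ∈ s)
    (h : IsLabelledPerm (insert N s) (Equiv.swap x N * ρ) L) :
    IsLabelledPerm s ρ (insert x (L.erase N)) := by
  have hρ : ∀ y ∉ s, ρ y = y := by
    intro y hy
    by_cases hyN : y = N
    · rwa [hyN]
    · have hfix := h.apply_of_notMem y (by simp [hyN, hy])
      rw [Equiv.Perm.mul_apply, Equiv.swap_apply_eq_iff] at hfix
      rw [hfix, Equiv.swap_apply_of_ne_of_ne (ne_of_mem_of_not_mem hx hy).symm hyN]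
  have hle : ∀ {y}, ρ y = x → y ≤ x := fun hyx =>
    le_of_swap_mul_unique hs hρ hx h.eq_of_le_apply hyx
  refine ⟨hρ, fun y z hyz hy hz => ?_, insert_subset hx (subset_insert_iff.1 h.subset),
    fun y hy hfix => ?_, fun y hy => ?_⟩
  · by_cases hyN : y = N
    · subst hyN
      exact hyz.eq_of_left hρN
    by_cases hzN : z = N
    · subst hzN
      exact hyz.eq_of_right hρN
    exact h.eq_of_le_apply y z ((sameCycle_swap_mul_iff hρN hyN hzN).2 hyz)
      ((le_swap_mul_apply_iff (hs x hx) hρN hyN hle).2 hy)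
      ((le_swap_mul_apply_iff (hs x hx) hρN hzN hle).2 hz)
  · rw [mem_insert, or_iff_not_imp_left]
    intro hyx
    have hyN := (hs y hy).ne
    refine mem_erase.2 ⟨hyN, h.mem_of_fixed y (mem_insert_of_mem hy) ?_⟩
    rwa [swap_mul_apply_of_ne hρN hyN (by rwa [hfix])]
  · by_cases hyx : ρ y = x
    · exact hyx ▸ hle hyx
    · obtain ⟨hyN, hyL⟩ := mem_erase.1 (mem_of_mem_insert_of_ne hy hyx)
      have hy' := swap_mul_apply_of_ne hρN (fun h => hyN (h ▸ hρN)) hyx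
      exact hy' ▸ h.le_of_apply_mem y (hy' ▸ hyL)

theorem IsLabelledPerm.swap_mul (hs : ∀ y ∈ s, y < N) (hx : x ∈ s) (hxL : x ∉ L)
    (h : IsLabelledPerm s ρ (insert x (L.erase N))) :
    IsLabelledPerm (insert N s) (Equiv.swap x N * ρ) L := by
  have hρN : ρ N = N := h.apply_of_notMem N fun h => (hs N h).false
  have hle : ∀ {y}, ρ y = x → y ≤ x := fun {y} hyx =>
    hyx ▸ h.le_of_apply_mem y (hyx ▸ mem_insert_self _ _)
  have hτN : (Equiv.swap x N * ρ) N = x := by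
    rw [Equiv.Perm.mul_apply, hρN, Equiv.swap_apply_right]
  have hτx : ∀ {y}, ρ y = x → (Equiv.swap x N * ρ) y = N := fun hyx => by
    rw [Equiv.Perm.mul_apply, hyx, Equiv.swap_apply_left]
  have hne : ∀ {y}, y ≤ (Equiv.swap x N * ρ) y → y ≠ N := by
    rintro _ hy rfl
    exact (hτN ▸ hy).not_gt (hs x hx)
  refine ⟨fun y hy => ?_, fun y z hyz hy hz => ?_, subset_insert_iff.2
    ((subset_insert _ _).trans h.subset), fun y hy hfix => ?_, fun y hy => ?_⟩
  · obtain ⟨hyN, hys⟩ := not_or.1 (mem_insert.not.1 hy)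
    have hfix := h.apply_of_notMem y hys
    rw [swap_mul_apply_of_ne hρN hyN (fun hyx => hys ((hfix.symm.trans hyx) ▸ hx)), hfix]
  · exact h.eq_of_le_apply y z ((sameCycle_swap_mul_iff hρN (hne hy) (hne hz)).1 hyz)
      ((le_swap_mul_apply_iff (hs x hx) hρN (hne hy) hle).1 hy)
      ((le_swap_mul_apply_iff (hs x hx) hρN (hne hz) hle).1 hz)
  · have hyN : y ≠ N := hne hfix.ge
    have hyx : ρ y ≠ x := fun hyx => hyN (hfix.symm.trans (hτx hyx))
    rw [swap_mul_apply_of_ne hρN hyN hyx] at hfix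
    exact mem_of_mem_erase (mem_of_mem_insert_of_ne
      (h.mem_of_fixed y (mem_of_mem_insert_of_ne hy hyN) hfix) (hfix ▸ hyx))
  · by_cases hyN : y = N
    · exact absurd (hτN ▸ hyN ▸ hy) hxL
    by_cases hyx : ρ y = x
    · rw [hτx hyx]
      exact (hle hyx).trans (hs x hx).le
    rw [swap_mul_apply_of_ne hρN hyN hyx] at hy ⊢
    have hρy : ρ y ≠ N := fun h => hyN (ρ.injective (h.trans hρN.symm))
    exact h.le_of_apply_mem y (mem_insert_of_mem (mem_erase.2 ⟨hρy, hy⟩))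

open scoped Classical in
/-- The labelled permutations of `s` with `m` labels. -/
noncomputable def labelledPerms (s : Finset ι) (m : ℕ) : Finset (Equiv.Perm ι × Finset ι) :=
  (permsOfFinset s ×ˢ powersetCard m s).filter fun p => IsLabelledPerm s p.1 p.2

@[simp]
theorem mem_labelledPerms {p : Equiv.Perm ι × Finset ι} :
    p ∈ labelledPerms s m ↔ IsLabelledPerm s p.1 p.2 ∧ p.2.card = m := by
  simp only [labelledPerms, mem_filter, mem_product, mem_perms_of_finset_iff, mem_powersetCard]
  refine ⟨fun h => ⟨h.2, h.1.2.2⟩, fun h => ⟨⟨fun {y} hy => ?_, h.1.subset, h.2⟩, h.1⟩⟩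
  by_contra hys
  exact hy (h.1.apply_of_notMem y hys)

theorem IsLabelledPerm.insert_iff_of_ne (hs : ∀ y ∈ s, y < N) (hπN : π N ≠ N) :
    IsLabelledPerm (insert N s) π L ↔ π N ∈ s ∧ π N ∉ L ∧
      IsLabelledPerm s (Equiv.swap (π N) N * π) (insert (π N) (L.erase N)) := by
  have hρN : (Equiv.swap (π N) N * π) N = N := Equiv.swap_apply_left _ _
  have hπ : Equiv.swap (π N) N * (Equiv.swap (π N) N * π) = π := Equiv.swap_mul_self_mul _ _ _
  constructor
  · intro h
    have hmem : π N ∈ s := by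
      by_contra hns
      exact hπN (π.injective (h.apply_of_notMem _ (by simp [hπN, hns])))
    exact ⟨hmem, fun hL => (hs _ hmem).not_ge (h.le_of_apply_mem N hL),
      .of_swap_mul hs hρN hmem (hπ.symm ▸ h)⟩
  · rintro ⟨hmem, hL, h⟩
    exact hπ ▸ h.swap_mul hs hmem hL

theorem card_labelledPerms_filter_fixed (hs : ∀ y ∈ s, y < N) (m : ℕ) :
    ((labelledPerms (insert N s) (m + 1)).filter fun p => p.1 N = N).card =
      (labelledPerms s m).card := by
  have hNs : N ∉ s := fun h => (hs N h).false
  refine card_bij' (fun p _ => (p.1, p.2.erase N)) (fun p _ => (p.1, insert N p.2)) ?_ ?_ ?_ ?_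
  · rintro ⟨π, L⟩ hp
    simp only [mem_filter, mem_labelledPerms] at hp ⊢
    obtain ⟨⟨hL, hcard⟩, hπN⟩ := hp
    obtain ⟨hNL, hL⟩ := (IsLabelledPerm.insert_iff_of_fixed hs hπN).1 hL
    exact ⟨hL, by rw [card_erase_of_mem hNL, hcard, Nat.add_sub_cancel]⟩
  · rintro ⟨π, L⟩ hp
    simp only [mem_filter, mem_labelledPerms] at hp ⊢
    have hπN := hp.1.apply_of_notMem N hNs
    have hNL : N ∉ L := fun h => hNs (hp.1.subset h)
    refine ⟨⟨(IsLabelledPerm.insert_iff_of_fixed hs hπN).2 ⟨mem_insert_self _ _, ?_⟩, ?_⟩, hπN⟩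
    · rw [erase_insert hNL]
      exact hp.1
    · rw [card_insert_of_notMem hNL, hp.2]
  · rintro ⟨π, L⟩ hp
    simp only [mem_filter, mem_labelledPerms] at hp
    rw [insert_erase ((IsLabelledPerm.insert_iff_of_fixed hs hp.2).1 hp.1.1).1]
  · rintro ⟨π, L⟩ hp
    simp only [mem_labelledPerms] at hp
    rw [erase_insert fun h => hNs (hp.1.subset h)]

theorem card_labelledPerms_filter_mem (hs : ∀ y ∈ s, y < N) (m : ℕ) :
    ((labelledPerms (insert N s) (m + 1)).filter fun p => p.1 N ≠ N ∧ N ∈ p.2).card =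
      ((labelledPerms (insert N s) m).filter fun p => p.1 N ≠ N ∧ N ∉ p.2).card := by
  refine card_bij' (fun p _ => (p.1, p.2.erase N)) (fun p _ => (p.1, insert N p.2)) ?_ ?_ ?_ ?_
  · rintro ⟨π, L⟩ hp
    simp only [mem_filter, mem_labelledPerms] at hp ⊢
    obtain ⟨⟨hL, hcard⟩, hπN, hNL⟩ := hp
    rw [IsLabelledPerm.insert_iff_of_ne hs hπN] at hL ⊢
    rw [erase_idem, card_erase_of_mem hNL, hcard]
    exact ⟨⟨⟨hL.1, fun h => hL.2.1 (mem_of_mem_erase h), hL.2.2⟩, rfl⟩, hπN, notMem_erase _ _⟩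
  · rintro ⟨π, L⟩ hp
    simp only [mem_filter, mem_labelledPerms] at hp ⊢
    obtain ⟨⟨hL, hcard⟩, hπN, hNL⟩ := hp
    rw [IsLabelledPerm.insert_iff_of_ne hs hπN] at hL ⊢
    rw [erase_insert_eq_erase, card_insert_of_notMem hNL, hcard]
    exact ⟨⟨⟨hL.1, fun h => hL.2.1 (mem_of_mem_insert_of_ne h hπN), hL.2.2⟩, rfl⟩, hπN,
      mem_insert_self _ _⟩
  · rintro ⟨π, L⟩ hp
    rw [insert_erase (mem_filter.1 hp).2.2]
  · rintro ⟨π, L⟩ hp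
    rw [erase_insert (mem_filter.1 hp).2.2]

theorem card_labelledPerms_filter_notMem (hs : ∀ y ∈ s, y < N) (m : ℕ) :
    ((labelledPerms (insert N s) m).filter fun p => p.1 N ≠ N ∧ N ∉ p.2).card =
      (m + 1) * (labelledPerms s (m + 1)).card := by
  have hsigma : ((labelledPerms s (m + 1)).sigma fun p => p.2).card =
      (m + 1) * (labelledPerms s (m + 1)).card := by
    rw [card_sigma, sum_const_nat fun p hp => (mem_labelledPerms.1 hp).2, mul_comm]
  have hNs : N ∉ s := fun h => (hs N h).false
  rw [← hsigma]
  refine card_bij' (fun p _ => ⟨(Equiv.swap (p.1 N) N * p.1, insert (p.1 N) p.2), p.1 N⟩)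
    (fun q _ => (Equiv.swap q.2 N * q.1.1, q.1.2.erase q.2)) ?_ ?_ ?_ ?_
  · rintro ⟨π, L⟩ hp
    simp only [mem_filter, mem_labelledPerms, mem_sigma] at hp ⊢
    obtain ⟨⟨hL, hcard⟩, hπN, hNL⟩ := hp
    obtain ⟨-, hπL, hL⟩ := (IsLabelledPerm.insert_iff_of_ne hs hπN).1 hL
    rw [erase_eq_of_notMem hNL] at hL
    exact ⟨⟨hL, by rw [card_insert_of_notMem hπL, hcard]⟩, mem_insert_self _ _⟩
  · rintro ⟨⟨ρ, L⟩, x⟩ hq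
    simp only [mem_filter, mem_labelledPerms, mem_sigma] at hq ⊢
    obtain ⟨⟨hL, hcard⟩, hx⟩ := hq
    have hxs := hL.subset hx
    have hNL : N ∉ L.erase x := fun h => hNs (hL.subset (mem_of_mem_erase h))
    refine ⟨⟨.swap_mul hs hxs (notMem_erase x L) ?_, ?_⟩, ?_, hNL⟩
    · rwa [erase_eq_of_notMem hNL, insert_erase hx]
    · rw [card_erase_of_mem hx, hcard, Nat.add_sub_cancel]
    · rw [Equiv.Perm.mul_apply, hL.apply_of_notMem N hNs, Equiv.swap_apply_right]
      exact (hs x hxs).ne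
  · rintro ⟨π, L⟩ hp
    simp only [mem_filter, mem_labelledPerms] at hp
    obtain ⟨⟨hL, -⟩, hπN, -⟩ := hp
    rw [Equiv.swap_mul_self_mul, erase_insert ((IsLabelledPerm.insert_iff_of_ne hs hπN).1 hL).2.1]
  · rintro ⟨⟨ρ, L⟩, x⟩ hq
    simp only [mem_labelledPerms, mem_sigma] at hq
    obtain ⟨⟨hL, -⟩, hx⟩ := hq
    have hτN : (Equiv.swap x N * ρ) N = x := by
      rw [Equiv.Perm.mul_apply, hL.apply_of_notMem N hNs, Equiv.swap_apply_right]
    simp only [hτN, Equiv.swap_mul_self_mul, insert_erase hx]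

/-- The number of labelled permutations of a `k`-element set with `m` labels. The three terms of
the recursion insert a new greatest element `N` into a permutation: as a labelled fixed point, into
a cycle which loses its label to `N`, or into a cycle which loses its label. -/
def labelCount : ℕ → ℕ → ℕ
  | 0, 0 => 1
  | 0, _ + 1 => 0
  | k + 1, 0 => labelCount k 1
  | k + 1, m + 1 =>
    labelCount k m + (m + 1) * labelCount k (m + 1) + (m + 2) * labelCount k (m + 2)

theorem labelCount_eq_zero_of_lt {k m : ℕ} (h : k < m) : labelCount k m = 0 := by
  induction k generalizing m with
  | zero =>
    obtain ⟨m, rfl⟩ := Nat.exists_eq_succ_of_ne_zero h.ne'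
    rfl
  | succ k ih =>
    obtain ⟨m, rfl⟩ := Nat.exists_eq_succ_of_ne_zero (Nat.ne_zero_of_lt h)
    simp only [labelCount, ih (show k < m by omega), ih (show k < m + 1 by omega),
      ih (show k < m + 2 by omega), mul_zero, add_zero]

theorem card_labelledPerms_insert (hs : ∀ y ∈ s, y < N) (m : ℕ) :
    (labelledPerms (insert N s) m).card =
      ((labelledPerms (insert N s) m).filter fun p => p.1 N = N).card +
      ((labelledPerms (insert N s) m).filter fun p => p.1 N ≠ N ∧ N ∈ p.2).card +
      (m + 1) * (labelledPerms s (m + 1)).card := by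
  rw [← card_labelledPerms_filter_notMem hs, ← filter_filter, ← filter_filter, add_assoc,
    card_filter_add_card_filter_not, card_filter_add_card_filter_not]

theorem labelledPerms_empty_zero : labelledPerms (∅ : Finset ι) 0 = {(1, ∅)} := by
  ext ⟨π, L⟩
  rw [mem_labelledPerms, mem_singleton, Prod.mk.injEq, card_eq_zero]
  refine and_congr_left ?_
  rintro rfl
  refine ⟨fun h => Equiv.ext fun y => h.apply_of_notMem y (notMem_empty y), ?_⟩
  rintro rfl
  exact ⟨fun _ _ => rfl, fun y z hyz _ _ => Equiv.Perm.sameCycle_one.1 hyz, subset_rfl,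
    fun y hy => absurd hy (notMem_empty y), fun y hy => absurd hy (notMem_empty _)⟩

theorem card_labelledPerms (s : Finset ι) (m : ℕ) :
    (labelledPerms s m).card = labelCount s.card m := by
  induction s using Finset.induction_on_max generalizing m with
  | empty =>
    rcases m with _ | m
    · rw [labelledPerms_empty_zero, card_singleton, card_empty, labelCount]
    · rw [card_empty, labelCount, card_eq_zero, eq_empty_iff_forall_notMem]
      intro p hp
      obtain ⟨hL, hcard⟩ := mem_labelledPerms.1 hp
      rw [subset_empty.1 hL.subset, card_empty] at hcard
      exact absurd hcard m.succ_ne_zero.symm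
  | insert N s hs ih =>
    rw [card_insert_of_notMem fun h => (hs N h).false, card_labelledPerms_insert hs]
    have hlabelled : ∀ p ∈ labelledPerms (insert N s) 0, N ∉ p.2 := fun p hp => by
      rw [card_eq_zero.1 (mem_labelledPerms.1 hp).2]
      exact notMem_empty N
    rcases m with _ | m
    · have hfixed : ((labelledPerms (insert N s) 0).filter fun p => p.1 N = N) = ∅ :=
        filter_false_of_mem fun p hp hfix => hlabelled p hp
          (((mem_labelledPerms.1 hp).1).mem_of_fixed N (mem_insert_self _ _) hfix)
      have hmem : ((labelledPerms (insert N s) 0).filter fun p => p.1 N ≠ N ∧ N ∈ p.2) = ∅ :=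
        filter_false_of_mem fun p hp h => hlabelled p hp h.2
      rw [hfixed, hmem, labelCount, ih, card_empty, zero_add, zero_add, zero_add, one_mul]
    · rw [card_labelledPerms_filter_fixed hs, card_labelledPerms_filter_mem hs,
        card_labelledPerms_filter_notMem hs, labelCount, ih, ih, ih]

end LabelledPermutations

section StandardFillings

variable {α β : YoungDiagram} {L : Finset ℕ} {f g : ℕ × ℕ → ℕ} {c : ℕ × ℕ} {M : ℕ}

/-- `f` is a standard filling of `α` whose set of labels is `L`, extended by `0` outside `α`. -/
structure IsStandardFilling (α : YoungDiagram) (L : Finset ℕ) (f : ℕ × ℕ → ℕ) : Prop where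
  strictMonoOn : StrictMonoOn f α
  bijOn : Set.BijOn f α L
  eq_zero : ∀ c ∉ α, f c = 0

theorem IsStandardFilling.image_eq (hf : IsStandardFilling α L f) : α.cells.image f = L := by
  rw [← coe_inj, coe_image]
  exact hf.bijOn.image_eq

theorem IsStandardFilling.card_eq (hf : IsStandardFilling α L f) : L.card = α.card :=
  hf.image_eq ▸ card_image_of_injOn hf.bijOn.injOn

instance finite_isStandardFilling (α : YoungDiagram) (L : Finset ℕ) :
    Finite {f // IsStandardFilling α L f} := by
  refine Finite.of_injective (β := α.cells → L)
    (fun f c => ⟨f.1 c, f.2.bijOn.mapsTo c.2⟩) fun f g hfg => Subtype.ext (funext fun c => ?_)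
  by_cases hc : c ∈ α
  · exact congrArg Subtype.val (congrFun hfg ⟨c, hc⟩)
  · rw [f.2.eq_zero c hc, g.2.eq_zero c hc]

theorem IsStandardFilling.update_insert (hL : ∀ x ∈ L, x < M) (hc : c ∉ β)
    (hα : α.cells = insert c β.cells) (hg : IsStandardFilling β L g) :
    IsStandardFilling α (insert M L) (Function.update g c M) := by
  have hmem : ∀ {d}, d ∈ α ↔ d = c ∨ d ∈ β := fun {d} => by
    rw [← YoungDiagram.mem_cells, hα, mem_insert, YoungDiagram.mem_cells]
  have hαset : (α : Set (ℕ × ℕ)) = insert c (β : Set (ℕ × ℕ)) := Set.ext fun _ => hmem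
  have hupdate : Set.EqOn g (Function.update g c M) β := fun d hd =>
    (Function.update_of_ne (ne_of_mem_of_not_mem hd hc) M g).symm
  have hM : Function.update g c M c = M := Function.update_self c M g
  refine ⟨?_, ?_, fun d hd => ?_⟩
  · intro d hd e he hde
    rcases hmem.1 hd with rfl | hdβ
    · rcases hmem.1 he with rfl | heβ
      · exact absurd hde (lt_irrefl _)
      · exact absurd (β.isLowerSet hde.le heβ) hc
    · rcases hmem.1 he with rfl | heβ
      · rw [hM, ← hupdate hdβ]
        exact hL _ (hg.bijOn.mapsTo hdβ)
      · rw [← hupdate hdβ, ← hupdate heβ]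
        exact hg.strictMonoOn hdβ heβ hde
  · rw [hαset, coe_insert]
    have hbij := (hg.bijOn.congr hupdate).insert (a := c)
      (by rw [hM]; exact fun h => (hL M h).false)
    rwa [hM] at hbij
  · obtain ⟨hdc, hdβ⟩ := not_or.1 (hmem.not.1 hd)
    rw [Function.update_of_ne hdc, hg.eq_zero d hdβ]

theorem IsStandardFilling.isCorner_of_apply_eq_max (hL : ∀ x ∈ L, x < M)
    (hf : IsStandardFilling α (insert M L) f) (hc : c ∈ α) (hcM : f c = M) : IsCorner α c := by
  refine isCorner_iff_maximal.2 ⟨hc, fun d hd hcd => ?_⟩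
  rcases hcd.eq_or_lt with rfl | hlt
  · exact le_rfl
  · have hfd := hf.strictMonoOn hc hd hlt
    rcases mem_insert.1 (hf.bijOn.mapsTo hd) with hdM | hdL
    · exact absurd hfd (by rw [hcM, hdM]; exact lt_irrefl M)
    · exact absurd hfd (by rw [hcM]; exact (hL _ hdL).not_gt)

theorem IsStandardFilling.update_eraseCell (hL : M ∉ L) (hf : IsStandardFilling α (insert M L) f)
    (hc : IsCorner α c) (hcM : f c = M) :
    IsStandardFilling (eraseCell α c hc) L (Function.update f c 0) := by
  have hmem : ∀ {d}, d ∈ eraseCell α c hc ↔ d ≠ c ∧ d ∈ α := mem_erase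
  have hset : (eraseCell α c hc : Set (ℕ × ℕ)) = (α : Set (ℕ × ℕ)) \ {c} :=
    Set.ext fun d => hmem.trans and_comm
  have hupdate : Set.EqOn f (Function.update f c 0) (eraseCell α c hc) :=
    fun d hd => (Function.update_of_ne (hmem.1 hd).1 0 f).symm
  refine ⟨?_, ?_, fun d hd => ?_⟩
  · refine (hf.strictMonoOn.mono ?_).congr hupdate
    exact hset ▸ Set.sdiff_subset
  · refine Set.BijOn.congr ?_ hupdate
    have hbij := hf.bijOn.sdiff_singleton hc.1
    rwa [hcM, coe_insert, Set.insert_sdiff_self_of_notMem (mem_coe.not.2 hL), ← hset] at hbij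
  · by_cases hdc : d = c
    · rw [hdc, Function.update_self]
    · rw [Function.update_of_ne hdc, hf.eq_zero d fun hd' => hd (hmem.2 ⟨hdc, hd'⟩)]

theorem card_standardFillings_insert (α : YoungDiagram) (hL : ∀ x ∈ L, x < M) :
    Nat.card {f // IsStandardFilling α (insert M L) f} =
      ∑ β ∈ lowerCovers α, Nat.card {g // IsStandardFilling β L g} := by
  have hML : M ∉ L := fun h => (hL M h).false
  have hcorner (c : corners α) : IsCorner α c := mem_corners.1 c.2
  have hcells (c : corners α) : α.cells = insert c.1 (eraseCell α c (hcorner c)).cells :=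
    (insert_erase (hcorner c).1).symm
  rw [sum_lowerCovers, ← Nat.card_sigma]
  symm
  refine Nat.card_eq_of_bijective (fun p : (Σ c : corners α,
      {g // IsStandardFilling (eraseCell α c (hcorner c)) L g}) =>
    ⟨Function.update p.2.1 p.1 M, p.2.2.update_insert hL (notMem_erase _ _) (hcells p.1)⟩) ⟨?_, ?_⟩
  · rintro ⟨c, g, hg⟩ ⟨c', g', hg'⟩ h
    have hupdate : Function.update g c M = Function.update g' c' M := congrArg Subtype.val h
    have hcc' : c = c' := by
      by_contra hne
      have hcM := congrFun hupdate c
      have hmem : c.1 ∈ eraseCell α c' (hcorner c') :=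
        mem_erase.2 ⟨fun h => hne (Subtype.ext h), (hcorner c).1⟩
      rw [Function.update_self, Function.update_of_ne fun h => hne (Subtype.ext h)] at hcM
      exact hML (hcM ▸ hg'.bijOn.mapsTo hmem)
    subst hcc'
    have hgg' : g = g' := funext fun d => by
      by_cases hd : d = c
      · have hnot : d ∉ eraseCell α c (hcorner c) := fun h => (mem_erase.1 h).1 hd
        rw [hg.eq_zero d hnot, hg'.eq_zero d hnot]
      · simpa only [Function.update_of_ne hd] using congrFun hupdate d
    subst hgg'
    rfl
  · rintro ⟨f, hf⟩
    obtain ⟨c, hcα, hcM⟩ := hf.bijOn.surjOn (mem_insert_self M L)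
    have hc := hf.isCorner_of_apply_eq_max hL hcα hcM
    refine ⟨⟨⟨c, mem_corners.2 hc⟩, _, hf.update_eraseCell hML hc hcM⟩, Subtype.ext ?_⟩
    exact (Function.update_idem _ _ _).trans (hcM ▸ Function.update_eq_self c f)

theorem isStandardFilling_empty_iff : IsStandardFilling α ∅ f ↔ α = ⊥ ∧ f = 0 := by
  constructor
  · intro hf
    have hα : α = ⊥ := YoungDiagram.ext (card_eq_zero.1 (hf.card_eq.symm.trans card_empty))
    exact ⟨hα, funext fun c => hf.eq_zero c (hα ▸ YoungDiagram.notMem_bot c)⟩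
  · rintro ⟨rfl, rfl⟩
    refine ⟨fun c hc => absurd hc (YoungDiagram.notMem_bot c), ?_, fun _ _ => rfl⟩
    rw [YoungDiagram.coe_bot, coe_empty]
    exact Set.bijOn_empty _

theorem card_standardFillings (α : YoungDiagram) (L : Finset ℕ) :
    Nat.card {f // IsStandardFilling α L f} = chainCount L.card α := by
  induction L using Finset.induction_on_max generalizing α with
  | empty =>
    simp only [isStandardFilling_empty_iff, card_empty, chainCount]
    split_ifs with hα <;> simp [hα]
  | insert M L hL ih =>
    rw [card_insert_of_notMem fun h => (hL M h).false, card_standardFillings_insert α hL,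
      chainCount]
    exact sum_congr rfl fun β _ => ih β

end StandardFillings

section TableauxWithPermutation

variable {k : ℕ} {α : YoungDiagram} {L : Finset ℕ} {f : ℕ × ℕ → ℕ}

theorem PartialST.isStandardFilling (T : PartialST α k) :
    IsStandardFilling α (α.cells.image T.label) T.label := by
  refine ⟨?_, ?_, T.zero_of_not_cell⟩
  · rintro ⟨i₁, j₁⟩ - ⟨i₂, j₂⟩ h₂ hlt
    obtain ⟨hi, hj⟩ := Prod.mk_le_mk.1 hlt.le
    have hrow : T.label (i₁, j₁) ≤ T.label (i₁, j₂) := by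
      rcases hj.eq_or_lt with rfl | hj
      · exact le_rfl
      · exact (T.row_incr i₁ j₁ j₂ hj (α.up_left_mem hi le_rfl h₂)).le
    rcases hi.eq_or_lt with rfl | hi
    · exact T.row_incr i₁ j₁ j₂ (Prod.mk_lt_mk_iff_right.1 hlt) h₂
    · exact hrow.trans_lt (T.col_incr i₁ i₂ j₂ hi h₂)
  · rw [coe_image]
    exact Set.InjOn.bijOn_image fun c hc d hd => T.injOn c hc d hd

/-- A standard filling with labels in `{1, …, k}` as a partial standard tableau. -/
def IsStandardFilling.toPartialST (hf : IsStandardFilling α L f) (hL : L ⊆ Icc 1 k) :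
    PartialST α k where
  label := f
  mem_of_cell _ hc := hL (hf.bijOn.mapsTo hc)
  zero_of_not_cell := hf.eq_zero
  injOn _ hc _ hd h := hf.bijOn.injOn hc hd h
  row_incr _ _ _ hj h := hf.strictMonoOn (α.up_left_mem le_rfl hj.le h) h
    (Prod.mk_lt_mk_iff_right.2 hj)
  col_incr _ _ _ hi h := hf.strictMonoOn (α.up_left_mem hi.le le_rfl h) h
    (Prod.mk_lt_mk_iff_left.2 hi)

theorem TabPerm.isLabelledPerm (t : TabPerm k α) :
    IsLabelledPerm (Icc 1 k) t.π (α.cells.image t.T.label) := by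
  have huniq := (decCycles_iff_eq_of_le_apply t.perm_of).1 t.dec
  refine ⟨t.perm_of, huniq, image_subset_iff.2 t.T.mem_of_cell, fun x hx hfix =>
    mem_image.2 (t.fix_mem x hx hfix), fun y hy => ?_⟩
  obtain ⟨c, hc, hcy⟩ := mem_image.1 hy
  exact (forall_sameCycle_le_iff t.perm_of huniq y).1 (hcy ▸ t.label_max c hc)

/-- A standard filling whose label set labels a permutation, as a pair `(T, π)`. -/
def IsStandardFilling.toTabPerm {π : Equiv.Perm ℕ} (hf : IsStandardFilling α L f)
    (hπ : IsLabelledPerm (Icc 1 k) π L) : TabPerm k α where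
  T := hf.toPartialST hπ.subset
  π := π
  perm_of := hπ.apply_of_notMem
  dec := (decCycles_iff_eq_of_le_apply hπ.apply_of_notMem).2 hπ.eq_of_le_apply
  fix_mem x hx hfix := hf.bijOn.surjOn (hπ.mem_of_fixed x hx hfix)
  label_max c hc := by
    obtain ⟨w, hw⟩ := π.surjective (f c)
    change ∀ y, π.SameCycle (f c) y → y ≤ f c
    rw [← hw, forall_sameCycle_le_iff hπ.apply_of_notMem hπ.eq_of_le_apply]
    exact hπ.le_of_apply_mem w (hw ▸ hf.bijOn.mapsTo hc)

/-- A pair `(T, π)` amounts to a permutation labelled by the entries of `T`, with a standard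
filling by these labels. -/
def tabPermEquiv (k : ℕ) (α : YoungDiagram) :
    TabPerm k α ≃ Σ p : labelledPerms (Icc 1 k) α.card, {f // IsStandardFilling α p.1.2 f} where
  toFun t := ⟨⟨(t.π, α.cells.image t.T.label), mem_labelledPerms.2
    ⟨t.isLabelledPerm, t.T.isStandardFilling.card_eq⟩⟩, t.T.label, t.T.isStandardFilling⟩
  invFun p := p.2.2.toTabPerm (mem_labelledPerms.1 p.1.2).1
  left_inv _ := rfl
  right_inv := by
    rintro ⟨⟨⟨π, L⟩, hp⟩, f, hf⟩
    obtain rfl : α.cells.image f = L := hf.image_eq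
    rfl

theorem card_tabPerm (k : ℕ) (α : YoungDiagram) :
    Nat.card (TabPerm k α) = labelCount k α.card * chainCount α.card α := by
  have hfillings : ∀ p : labelledPerms (Icc 1 k) α.card,
      Nat.card {f // IsStandardFilling α p.1.2 f} = chainCount α.card α := fun p => by
    rw [card_standardFillings, (mem_labelledPerms.1 p.2).2]
  rw [Nat.card_congr (tabPermEquiv k α), Nat.card_sigma, sum_congr rfl fun p _ => hfillings p,
    sum_const, card_univ, Fintype.card_coe, card_labelledPerms, Nat.card_Icc,
    Nat.add_sub_cancel, smul_eq_mul]

end TableauxWithPermutation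

section StepWeight

variable {α β γ : YoungDiagram}

theorem le_iff_card_inf_eq : β ≤ α ↔ (β ⊓ α).card = β.card := by
  rw [← inf_eq_left]
  refine ⟨congrArg _, fun h => YoungDiagram.ext ?_⟩
  exact eq_of_subset_of_card_le (YoungDiagram.cells_subset_iff.2 inf_le_left) h.ge

theorem card_inf_le_left (α β : YoungDiagram) : (α ⊓ β).card ≤ α.card :=
  card_le_card (YoungDiagram.cells_subset_iff.2 inf_le_left)

open scoped Classical in
/-- The number of ways of passing from `γ` to `α` by adding a corner, or removing a corner, or
removing a corner and then adding one. -/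
noncomputable def stepWeight (γ α : YoungDiagram) : ℕ :=
  (if γ ⋖ α then 1 else 0) + (if α ⋖ γ then 1 else 0) + {β ∈ lowerCovers α | β ⋖ γ}.card

theorem stepWeight_self (α : YoungDiagram) : stepWeight α α = (lowerCovers α).card := by
  classical
  rw [stepWeight, if_neg fun h => h.lt.false, zero_add, zero_add,
    filter_true_of_mem fun β hβ => mem_lowerCovers.1 hβ]

open scoped Classical in
theorem stepWeight_of_ne (hne : γ ≠ α) :
    stepWeight γ α = (if γ ⋖ α then 1 else 0) + (if α ⋖ γ then 1 else 0) +
      if γ ⊓ α ⋖ γ ∧ γ ⊓ α ⋖ α then 1 else 0 := by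
  rw [stepWeight]
  congr 1
  have hinf : ∀ β, β ⋖ γ → β ⋖ α → γ ⊓ α = β := fun β hγ hα => hγ.wcovBy.inf_eq hα.wcovBy hne
  split_ifs with h
  · rw [card_eq_one]
    refine ⟨γ ⊓ α, eq_singleton_iff_unique_mem.2 ⟨?_, fun β hβ => ?_⟩⟩
    · exact mem_filter.2 ⟨mem_lowerCovers.2 h.2, h.1⟩
    · obtain ⟨hα, hγ⟩ := mem_filter.1 hβ
      exact (hinf β hγ (mem_lowerCovers.1 hα)).symm
  · rw [card_eq_zero, filter_eq_empty_iff]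
    intro β hα hγ
    have hα := mem_lowerCovers.1 hα
    exact h ⟨(hinf β hγ hα).symm ▸ hγ, (hinf β hγ hα).symm ▸ hα⟩

theorem exists_of_stepWeight_ne_zero (h : stepWeight γ α ≠ 0) :
    γ ⋖ α ∨ α ⋖ γ ∨ ∃ β, β ⋖ α ∧ β ⋖ γ := by
  classical
  by_contra! hnone
  obtain ⟨hγα, hαγ, hβ⟩ := hnone
  refine h ?_
  rw [stepWeight, if_neg hγα, if_neg hαγ,
    filter_false_of_mem fun β hβα => hβ β (mem_lowerCovers.1 hβα), card_empty]

theorem rowLen_mono (h : β ≤ α) (i : ℕ) : β.rowLen i ≤ α.rowLen i := by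
  refine le_of_forall_lt fun j hj => ?_
  rw [← YoungDiagram.mem_iff_lt_rowLen] at hj ⊢
  exact h hj

theorem rowLen_le_add_one_of_covBy (h : β ⋖ α) (i : ℕ) : α.rowLen i ≤ β.rowLen i + 1 := by
  obtain ⟨i', -, hα⟩ := exists_rowEnd_of_covBy h
  by_contra! hlt
  have hmem : (i, β.rowLen i + 1) ∈ α.cells := YoungDiagram.mem_iff_lt_rowLen.2 hlt
  rw [hα, mem_insert, YoungDiagram.mem_cells, YoungDiagram.mem_iff_lt_rowLen,
    Prod.mk.injEq] at hmem
  rcases hmem with ⟨rfl, hj⟩ | hj <;> omega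

theorem rowLen_le_add_one_of_stepWeight_ne_zero (h : stepWeight γ α ≠ 0) (i : ℕ) :
    γ.rowLen i ≤ α.rowLen i + 1 := by
  rcases exists_of_stepWeight_ne_zero h with hγα | hαγ | ⟨β, hβα, hβγ⟩
  · exact (rowLen_mono hγα.le i).trans (Nat.le_succ _)
  · exact rowLen_le_add_one_of_covBy hαγ i
  · exact (rowLen_le_add_one_of_covBy hβγ i).trans (Nat.succ_le_succ (rowLen_mono hβα.le i))

/-- On functions, `stepWeight` is the operator `D + U + UD` of Young's lattice. -/
theorem sum_mul_stepWeight (V : YoungDiagram → ℕ) (S : Finset YoungDiagram)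
    (hS : ∀ γ, V γ ≠ 0 → stepWeight γ α ≠ 0 → γ ∈ S) :
    ∑ γ ∈ S, V γ * stepWeight γ α = ∑ γ ∈ lowerCovers α, V γ + ∑ γ ∈ upperCovers α, V γ +
      ∑ β ∈ lowerCovers α, ∑ γ ∈ upperCovers β, V γ := by
  classical
  let T := S ∪ lowerCovers α ∪ upperCovers α ∪ (lowerCovers α).biUnion upperCovers
  have hST : ∑ γ ∈ S, V γ * stepWeight γ α = ∑ γ ∈ T, V γ * stepWeight γ α := by
    refine sum_subset (fun γ hγ => by simp [T, hγ]) fun γ _ hγS => ?_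
    by_contra hne
    exact hγS (hS γ (left_ne_zero_of_mul hne) (right_ne_zero_of_mul hne))
  have hindicator : ∀ {R : Finset YoungDiagram} {p : YoungDiagram → Prop}, R ⊆ T →
      (∀ γ, γ ∈ R ↔ p γ) → ∑ γ ∈ T, V γ * (if p γ then 1 else 0) = ∑ γ ∈ R, V γ := by
    intro R p hRT hR
    simp only [← hR, mul_ite, mul_one, mul_zero]
    rw [sum_ite_mem, inter_eq_right.2 hRT]
  have hlower : lowerCovers α ⊆ T := fun γ hγ => by simp only [T, mem_union, hγ, true_or, or_true]
  have hupper : upperCovers α ⊆ T := fun γ hγ => by simp only [T, mem_union, hγ, true_or, or_true]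
  have hupper_lower : ∀ β ∈ lowerCovers α, upperCovers β ⊆ T := fun β hβ =>
    (subset_biUnion_of_mem _ hβ).trans subset_union_right
  rw [hST]
  simp only [stepWeight, mul_add, sum_add_distrib, card_filter, mul_sum]
  rw [sum_comm (s := T), hindicator hlower fun _ => mem_lowerCovers,
    hindicator hupper fun _ => mem_upperCovers]
  exact congrArg _ (sum_congr rfl fun β hβ => hindicator (hupper_lower β hβ) fun _ =>
    mem_upperCovers)

theorem card_tabPerm_zero_bot : Nat.card (TabPerm 0 ⊥) = 1 := by
  rw [card_tabPerm]
  change labelCount 0 0 * chainCount 0 ⊥ = 1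
  rw [labelCount, chainCount, if_pos rfl]

theorem card_tabPerm_eq_zero_of_lt {k : ℕ} (h : k < α.card) : Nat.card (TabPerm k α) = 0 := by
  rw [card_tabPerm, labelCount_eq_zero_of_lt h, zero_mul]

theorem sum_upperCovers_card_tabPerm (k : ℕ) (β : YoungDiagram) :
    ∑ γ ∈ upperCovers β, Nat.card (TabPerm k γ) =
      (β.card + 1) * labelCount k (β.card + 1) * chainCount β.card β := by
  have hcard : ∀ γ ∈ upperCovers β, Nat.card (TabPerm k γ) =
      labelCount k (β.card + 1) * chainCount (β.card + 1) γ := fun γ hγ => by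
    rw [card_tabPerm, card_add_one_of_covBy (mem_upperCovers.1 hγ)]
  rw [sum_congr rfl hcard, ← mul_sum, sum_upperCovers_chainCount]
  ring

theorem sum_lowerCovers_mul_chainCount {m : ℕ} (hα : α.card = m + 1) (G : ℕ → ℕ) :
    ∑ β ∈ lowerCovers α, G β.card * chainCount β.card β = G m * chainCount (m + 1) α := by
  rw [chainCount, mul_sum]
  refine sum_congr rfl fun β hβ => ?_
  have hβα := card_add_one_of_covBy (mem_lowerCovers.1 hβ)
  rw [show β.card = m by omega]

theorem card_tabPerm_succ (k : ℕ) (α : YoungDiagram) :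
    Nat.card (TabPerm (k + 1) α) = ∑ γ ∈ lowerCovers α, Nat.card (TabPerm k γ) +
      ∑ γ ∈ upperCovers α, Nat.card (TabPerm k γ) +
      ∑ β ∈ lowerCovers α, ∑ γ ∈ upperCovers β, Nat.card (TabPerm k γ) := by
  rw [sum_upperCovers_card_tabPerm, sum_congr rfl fun β _ => sum_upperCovers_card_tabPerm k β]
  simp only [card_tabPerm]
  rcases hα : α.card with _ | m
  · have hempty : lowerCovers α = ∅ := eq_empty_of_forall_notMem fun β hβ => by
      have hβα := card_add_one_of_covBy (mem_lowerCovers.1 hβ)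
      omega
    simp only [hempty, labelCount, sum_empty]
    ring
  · rw [sum_lowerCovers_mul_chainCount hα,
      sum_lowerCovers_mul_chainCount hα fun m => (m + 1) * labelCount k (m + 1), labelCount]
    ring

end StepWeight

section Truncation

variable {μ ν : YoungDiagram} {i j : ℕ}

@[simp]
theorem mem_truncate : (i, j) ∈ truncate μ ↔ (i + 1, j) ∈ μ := by
  rw [← YoungDiagram.mem_cells, truncate, mem_image]
  simp only [mem_filter, YoungDiagram.mem_cells]
  constructor
  · rintro ⟨⟨a, b⟩, ⟨hab, ha⟩, h⟩
    obtain ⟨rfl, rfl⟩ := Prod.mk.inj h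
    rwa [Nat.sub_add_cancel ha]
  · exact fun h => ⟨(i + 1, j), ⟨h, i.succ_pos⟩, rfl⟩

theorem rowLen_truncate (μ : YoungDiagram) (i : ℕ) :
    (truncate μ).rowLen i = μ.rowLen (i + 1) :=
  eq_of_forall_lt_iff fun j => by
    rw [← YoungDiagram.mem_iff_lt_rowLen, mem_truncate, YoungDiagram.mem_iff_lt_rowLen]

theorem rowLen_inf (μ ν : YoungDiagram) (i : ℕ) :
    (μ ⊓ ν).rowLen i = min (μ.rowLen i) (ν.rowLen i) :=
  eq_of_forall_lt_iff fun j => by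
    simp only [lt_min_iff, ← YoungDiagram.mem_iff_lt_rowLen, YoungDiagram.mem_inf]

theorem truncate_inf (μ ν : YoungDiagram) : truncate (μ ⊓ ν) = truncate μ ⊓ truncate ν := by
  refine YoungDiagram.ext (Finset.ext fun ⟨i, j⟩ => ?_)
  simp [YoungDiagram.mem_inf]

theorem isCorner_truncate_iff : IsCorner (truncate μ) (i, j) ↔ IsCorner μ (i + 1, j) := by
  simp only [isCorner_iff_rowLen, rowLen_truncate]

theorem card_eq_rowLen_zero_add_card_truncate (μ : YoungDiagram) :
    μ.card = μ.rowLen 0 + (truncate μ).card := by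
  have htruncate : (truncate μ).card = (μ.cells.filter fun c => ¬ c.1 = 0).card := by
    have hpos : (μ.cells.filter fun c => ¬ c.1 = 0) = μ.cells.filter fun c => 1 ≤ c.1 :=
      filter_congr fun c _ => Nat.one_le_iff_ne_zero.symm
    rw [hpos]
    refine card_image_of_injOn fun c hc d hd hcd => ?_
    have hc1 := (mem_filter.1 hc).2
    have hd1 := (mem_filter.1 hd).2
    obtain ⟨h1, h2⟩ := Prod.mk.inj hcd
    exact Prod.ext (by omega) h2
  rw [htruncate, YoungDiagram.rowLen_eq_card, YoungDiagram.row]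
  exact (card_filter_add_card_filter_not _).symm

theorem truncate_injOn_diagramsOfCard (n : ℕ) :
    Set.InjOn truncate (diagramsOfCard n : Set YoungDiagram) := by
  intro μ hμ ν hν h
  rw [mem_coe, mem_diagramsOfCard] at hμ hν
  have hμ0 := card_eq_rowLen_zero_add_card_truncate μ
  have hν0 := card_eq_rowLen_zero_add_card_truncate ν
  rw [h] at hμ0
  refine YoungDiagram.ext (Finset.ext fun ⟨i, j⟩ => ?_)
  rw [YoungDiagram.mem_cells, YoungDiagram.mem_cells]
  rcases i with _ | i
  · rw [YoungDiagram.mem_iff_lt_rowLen, YoungDiagram.mem_iff_lt_rowLen,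
      show μ.rowLen 0 = ν.rowLen 0 by omega]
  · rw [← mem_truncate, ← mem_truncate, h]

theorem truncate_ofRowLens_cons {r : ℕ} {w : List ℕ} (h : (r :: w).SortedGE) :
    truncate (YoungDiagram.ofRowLens (r :: w) h) =
      YoungDiagram.ofRowLens w h.pairwise.of_cons.sortedGE := by
  refine YoungDiagram.ext (Finset.ext fun ⟨i, j⟩ => ?_)
  simp [YoungDiagram.mem_ofRowLens]

theorem card_ofRowLens (w : List ℕ) (h : w.SortedGE) :
    (YoungDiagram.ofRowLens w h).card = w.sum := by
  induction w with
  | nil => rfl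
  | cons r w ih =>
    rw [card_eq_rowLen_zero_add_card_truncate, truncate_ofRowLens_cons, ih, List.sum_cons]
    exact congrArg (· + w.sum) (YoungDiagram.rowLen_ofRowLens (hw := h) ⟨0, by simp⟩)

theorem card_rowDiagram (n : ℕ) : (rowDiagram n).card = n := by
  rw [rowDiagram, card_ofRowLens, List.sum_singleton]

theorem truncate_rowDiagram (n : ℕ) : truncate (rowDiagram n) = ⊥ :=
  truncate_ofRowLens_cons _

theorem exists_truncate_eq {n : ℕ} {γ : YoungDiagram} (h : γ.rowLen 0 + γ.card ≤ n) :
    ∃ μ ∈ diagramsOfCard n, truncate μ = γ := by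
  have hsorted : ((n - γ.card) :: γ.rowLens).SortedGE := by
    refine (List.pairwise_cons.2 ⟨fun x hx => ?_, γ.rowLens_sorted.pairwise⟩).sortedGE
    obtain ⟨i, -, rfl⟩ := List.mem_map.1 hx
    have := γ.rowLen_anti 0 i i.zero_le
    omega
  have hγ := YoungDiagram.ofRowLens_to_rowLens_eq_self (μ := γ)
  have hsum : γ.rowLens.sum = γ.card := by rw [← card_ofRowLens _ γ.rowLens_sorted, hγ]
  refine ⟨.ofRowLens _ hsorted, ?_, (truncate_ofRowLens_cons _).trans hγ⟩
  rw [mem_diagramsOfCard, card_ofRowLens, List.sum_cons, hsum]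
  omega

end Truncation

section KroneckerSteps

variable {μ ν : YoungDiagram} {c : ℕ × ℕ} {d : Option (ℕ × ℕ)}

theorem moveCorner_iff : MoveCorner μ ν ↔ μ ≠ ν ∧ μ ⊓ ν ⋖ μ ∧ μ ⊓ ν ⋖ ν := by
  refine ⟨fun ⟨hne, c, c', hc, _, hc', hν⟩ => ?_, fun ⟨hne, hμ, hν⟩ => ?_⟩
  · have hκμ : eraseCell μ c hc ⋖ μ := eraseCell_covBy hc
    have hκν : eraseCell μ c hc ⋖ ν := covBy_iff_cells.2 (hν ▸ covBy_insert hc')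
    rw [hκμ.wcovBy.inf_eq hκν.wcovBy hne.symm]
    exact ⟨hne.symm, hκμ, hκν⟩
  · obtain ⟨c, hc, hinf⟩ := covBy_iff_removeCorner.1 hμ
    obtain ⟨c', hc', hinf'⟩ := covBy_iff_removeCorner.1 hν
    refine ⟨hne.symm, c, c', hc, hc', ?_, ?_⟩
    · rw [← hinf, hinf']
      exact notMem_erase c' _
    · rw [← hinf, hinf', insert_erase hc'.1]

theorem card_eq_of_moveCorner (h : MoveCorner μ ν) : ν.card = μ.card := by
  obtain ⟨-, hμ, hν⟩ := moveCorner_iff.1 h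
  rw [← card_add_one_of_covBy hμ, ← card_add_one_of_covBy hν]

/-- `d` is a valid datum for a step from `μ` to `ν` in a Kronecker tableau. -/
def IsStep (μ ν : YoungDiagram) (d : Option (ℕ × ℕ)) : Prop :=
  (MoveCorner μ ν ∧ d = none) ∨
    (ν = μ ∧ ∃ c, d = some c ∧ IsCorner ν c ∧ ¬ IsFirstCorner ν c)

theorem IsStep.card_eq (h : IsStep μ ν d) : ν.card = μ.card := by
  rcases h with ⟨h, -⟩ | ⟨rfl, -⟩
  · exact card_eq_of_moveCorner h
  · rfl

theorem IsStep.mem_insertNone (h : IsStep μ ν d) : d ∈ insertNone ν.cells := by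
  rcases h with ⟨-, rfl⟩ | ⟨-, c, rfl, hc, -⟩
  · exact none_mem_insertNone
  · exact some_mem_insertNone.2 hc.1

instance finite_isStep (μ ν : YoungDiagram) : Finite {d // IsStep μ ν d} :=
  (insertNone ν.cells).finite_toSet.subset fun _ => IsStep.mem_insertNone

theorem isFirstCorner_iff (h : μ.rowLen 1 < μ.rowLen 0) :
    IsFirstCorner μ c ↔ IsCorner μ c ∧ c.1 = 0 := by
  refine and_congr_right' ⟨fun hc => ?_, fun hc => by rw [hc]⟩
  by_contra hc0
  have := μ.rowLen_anti 1 c.1 (Nat.one_le_iff_ne_zero.2 hc0)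
  omega

open scoped Classical in
theorem card_isStep_of_ne (hne : μ ≠ ν) :
    Nat.card {d // IsStep μ ν d} = if MoveCorner μ ν then 1 else 0 := by
  have hiff : ∀ d, IsStep μ ν d ↔ MoveCorner μ ν ∧ d = none := fun d =>
    or_iff_left fun h => hne h.1.symm
  simp only [hiff]
  split_ifs with h <;> simp [h]

theorem card_isStep_self (h : μ.rowLen 1 < μ.rowLen 0) :
    Nat.card {d // IsStep μ μ d} = (lowerCovers (truncate μ)).card := by
  let shift : ℕ × ℕ → Option (ℕ × ℕ) := fun c => some (c.1 + 1, c.2)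
  have hshift : Function.Injective shift := fun c d hcd => by
    simpa [shift, Prod.ext_iff] using hcd
  have himage : {d | IsStep μ μ d} = shift '' corners (truncate μ) := by
    ext d
    constructor
    · rintro (⟨hmove, -⟩ | ⟨-, ⟨i, j⟩, rfl, hc, hfirst⟩)
      · exact absurd rfl hmove.1
      · obtain ⟨i, rfl⟩ : ∃ i', i = i' + 1 := Nat.exists_eq_succ_of_ne_zero fun hi =>
          hfirst ((isFirstCorner_iff h).2 ⟨hc, hi⟩)
        exact ⟨(i, j), mem_corners.2 (isCorner_truncate_iff.2 hc), rfl⟩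
    · rintro ⟨⟨i, j⟩, hc, rfl⟩
      refine .inr ⟨rfl, _, rfl, isCorner_truncate_iff.1 (mem_corners.1 hc), fun hfirst => ?_⟩
      exact i.succ_ne_zero ((isFirstCorner_iff h).1 hfirst).2
  rw [card_lowerCovers, ← Nat.card_eq_finsetCard (corners (truncate μ))]
  exact (congrArg (fun s : Set _ => Nat.card s) himage).trans
    (Nat.card_image_of_injective hshift _)

theorem card_isStep_eq_stepWeight (hcard : μ.card = ν.card)
    (h : μ = ν → μ.rowLen 1 < μ.rowLen 0) :
    Nat.card {d // IsStep μ ν d} = stepWeight (truncate μ) (truncate ν) := by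
  classical
  rcases eq_or_ne μ ν with rfl | hne
  · rw [card_isStep_self (h rfl), stepWeight_self]
  have hne' : truncate μ ≠ truncate ν := fun heq => hne <|
    truncate_injOn_diagramsOfCard ν.card (mem_diagramsOfCard.2 hcard) (mem_diagramsOfCard.2 rfl)
      heq
  have hμ := card_eq_rowLen_zero_add_card_truncate μ
  have hν := card_eq_rowLen_zero_add_card_truncate ν
  have hinf := card_eq_rowLen_zero_add_card_truncate (μ ⊓ ν)
  have hle := card_inf_le_left (truncate μ) (truncate ν)
  have hle' := card_inf_le_left (truncate ν) (truncate μ)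
  rw [inf_comm] at hle'
  rw [rowLen_inf, truncate_inf] at hinf
  rw [card_isStep_of_ne hne, stepWeight_of_ne hne']
  simp only [moveCorner_iff, covBy_iff_card, inf_le_left, inf_le_right, true_and, hne, ne_eq,
    not_false_eq_true, le_iff_card_inf_eq, inf_comm (truncate ν)]
  split_ifs <;> omega

end KroneckerSteps

section KroneckerTableaux

variable {k : ℕ} {μ ν lam : YoungDiagram}

theorem KroneckerTableau.ext_of_seq_dist {s t : KroneckerTableau k μ lam} (hseq : s.seq = t.seq)
    (hdist : s.dist = t.dist) : s = t := by
  cases s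
  cases t
  congr

instance subsingleton_kroneckerTableau_zero (μ lam : YoungDiagram) :
    Subsingleton (KroneckerTableau 0 μ lam) where
  allEq s t := KroneckerTableau.ext_of_seq_dist
    (funext fun i => by rw [Fin.fin_one_eq_zero i, s.init, t.init]) (funext fun i => i.elim0)

theorem KroneckerTableau.card_eq (t : KroneckerTableau k μ lam) : lam.card = μ.card := by
  have hseq : ∀ i, (t.seq i).card = μ.card := Fin.induction (by rw [t.init]) fun i ih =>
    (IsStep.card_eq (t.step i)).trans ih
  rw [← hseq (Fin.last k), t.final]

/-- The Kronecker tableau obtained from `t` by appending the step with datum `d`. -/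
def KroneckerTableau.snoc (t : KroneckerTableau k μ ν) (d : {d // IsStep ν lam d}) :
    KroneckerTableau (k + 1) μ lam where
  seq := Fin.snoc t.seq lam
  dist := Fin.snoc t.dist d.1
  init := (Fin.snoc_castSucc (α := fun _ => YoungDiagram) lam t.seq 0).trans t.init
  final := Fin.snoc_last _ _
  step := Fin.lastCases
    (by
      rw [Fin.succ_last, Fin.snoc_last, Fin.snoc_castSucc, Fin.snoc_last, t.final]
      exact d.2)
    fun i => by
      rw [Fin.succ_castSucc, Fin.snoc_castSucc, Fin.snoc_castSucc, Fin.snoc_castSucc]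
      exact t.step i

/-- The Kronecker tableau obtained from `t` by deleting the last step. -/
def KroneckerTableau.dropLast (t : KroneckerTableau (k + 1) μ lam) :
    KroneckerTableau k μ (t.seq (Fin.last k).castSucc) where
  seq := Fin.init t.seq
  dist := Fin.init t.dist
  init := t.init
  final := rfl
  step i := t.step i.castSucc

theorem KroneckerTableau.isStep_last (t : KroneckerTableau (k + 1) μ lam) :
    IsStep (t.seq (Fin.last k).castSucc) lam (t.dist (Fin.last k)) := by
  have hstep := t.step (Fin.last k)
  rwa [Fin.succ_last, t.final] at hstep

theorem KroneckerTableau.dropLast_snoc_isStep_last (t : KroneckerTableau (k + 1) μ lam) :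
    t.dropLast.snoc ⟨_, t.isStep_last⟩ = t := by
  refine ext_of_seq_dist ?_ (Fin.snoc_init_self t.dist)
  have hseq := Fin.snoc_init_self t.seq
  rwa [t.final] at hseq

/-- A Kronecker tableau of positive length amounts to its last step, preceded by a Kronecker
tableau. -/
noncomputable def kroneckerTableauSuccEquiv (k : ℕ) (μ lam : YoungDiagram) :
    (Σ ν : diagramsOfCard μ.card, KroneckerTableau k μ ν × {d // IsStep ν lam d}) ≃
      KroneckerTableau (k + 1) μ lam :=
  .ofBijective (fun p => p.2.1.snoc p.2.2) <| by
    refine ⟨?_, fun t => ?_⟩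
    · rintro ⟨⟨ν, hν⟩, t, d, hd⟩ ⟨⟨ν', hν'⟩, t', d', hd'⟩ h
      obtain ⟨hseq, -⟩ := Fin.snoc_inj (α := fun _ => YoungDiagram).1
        (congrArg KroneckerTableau.seq h)
      obtain ⟨hdist, rfl⟩ := Fin.snoc_inj (α := fun _ => Option (ℕ × ℕ)).1
        (congrArg KroneckerTableau.dist h)
      obtain rfl : ν = ν' := t.final.symm.trans ((congrFun hseq _).trans t'.final)
      obtain rfl := KroneckerTableau.ext_of_seq_dist hseq hdist
      rfl
    · exact ⟨⟨⟨_, mem_diagramsOfCard.2 t.dropLast.card_eq⟩, t.dropLast, _, t.isStep_last⟩,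
        t.dropLast_snoc_isStep_last⟩

instance finite_kroneckerTableau (k : ℕ) (μ lam : YoungDiagram) :
    Finite (KroneckerTableau k μ lam) := by
  induction k generalizing lam with
  | zero => infer_instance
  | succ k ih => exact .of_equiv _ (kroneckerTableauSuccEquiv k μ lam)

theorem card_kroneckerTableau_succ (k : ℕ) (μ lam : YoungDiagram) :
    Nat.card (KroneckerTableau (k + 1) μ lam) = ∑ ν ∈ diagramsOfCard μ.card,
      Nat.card (KroneckerTableau k μ ν) * Nat.card {d // IsStep ν lam d} := by
  rw [← Nat.card_congr (kroneckerTableauSuccEquiv k μ lam), Nat.card_sigma]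
  simp only [Nat.card_prod]
  exact sum_coe_sort (diagramsOfCard μ.card) fun ν =>
    Nat.card (KroneckerTableau k μ ν) * Nat.card {d // IsStep ν lam d}

end KroneckerTableaux

section Recursion

variable {n k : ℕ} {ν lam : YoungDiagram}

theorem eq_rowDiagram_iff (hcard : lam.card = n) : lam = rowDiagram n ↔ truncate lam = ⊥ := by
  refine ⟨fun h => h ▸ truncate_rowDiagram n, fun h => ?_⟩
  exact truncate_injOn_diagramsOfCard n (mem_diagramsOfCard.2 hcard)
    (mem_diagramsOfCard.2 (card_rowDiagram n)) (h.trans (truncate_rowDiagram n).symm)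

theorem card_kroneckerTableau_zero_rowDiagram (hcard : lam.card = n) :
    Nat.card (KroneckerTableau 0 (rowDiagram n) lam) = Nat.card (TabPerm 0 (truncate lam)) := by
  rcases eq_or_ne (truncate lam) ⊥ with h | h
  · obtain rfl := (eq_rowDiagram_iff hcard).2 h
    have : Unique (KroneckerTableau 0 (rowDiagram n) (rowDiagram n)) :=
      uniqueOfSubsingleton ⟨fun _ => rowDiagram n, Fin.elim0, rfl, rfl, fun i => i.elim0⟩
    rw [h, card_tabPerm_zero_bot, Nat.card_unique]
  · have : IsEmpty (KroneckerTableau 0 (rowDiagram n) lam) :=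
      ⟨fun t => h ((eq_rowDiagram_iff hcard).1 (t.final.symm.trans t.init))⟩
    have hpos : 0 < (truncate lam).card := card_pos.2 <| nonempty_iff_ne_empty.2 fun h' =>
      h (YoungDiagram.ext h')
    rw [card_tabPerm_eq_zero_of_lt hpos, Nat.card_of_isEmpty]

theorem card_kroneckerTableau_mul_card_isStep
    (ih : ∀ ν : YoungDiagram, ν.card = n → k + ν.rowLen 1 ≤ n →
      Nat.card (KroneckerTableau k (rowDiagram n) ν) = Nat.card (TabPerm k (truncate ν)))
    (hν : ν.card = n) (hcard : lam.card = n) (hstable : k + 1 + lam.rowLen 1 ≤ n) :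
    Nat.card (KroneckerTableau k (rowDiagram n) ν) * Nat.card {d // IsStep ν lam d} =
      Nat.card (TabPerm k (truncate ν)) * stepWeight (truncate ν) (truncate lam) := by
  have hν' := card_eq_rowLen_zero_add_card_truncate ν
  by_cases hdeg : ν = lam ∧ ν.rowLen 0 ≤ ν.rowLen 1
  · obtain ⟨rfl, hle⟩ := hdeg
    have hzero : Nat.card (TabPerm k (truncate ν)) = 0 := card_tabPerm_eq_zero_of_lt (by omega)
    rw [ih ν hν (by omega), hzero, zero_mul, zero_mul]
  · rw [card_isStep_eq_stepWeight (hν.trans hcard.symm) fun h => not_le.1 fun hle => hdeg ⟨h, hle⟩]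
    by_cases hw : stepWeight (truncate ν) (truncate lam) = 0
    · rw [hw, mul_zero, mul_zero]
    · have hrow := rowLen_le_add_one_of_stepWeight_ne_zero hw 0
      rw [rowLen_truncate, rowLen_truncate, zero_add] at hrow
      rw [ih ν hν (by omega)]

theorem card_kroneckerTableau_succ_of_stable
    (ih : ∀ ν : YoungDiagram, ν.card = n → k + ν.rowLen 1 ≤ n →
      Nat.card (KroneckerTableau k (rowDiagram n) ν) = Nat.card (TabPerm k (truncate ν)))
    (hcard : lam.card = n) (hstable : k + 1 + lam.rowLen 1 ≤ n) :
    Nat.card (KroneckerTableau (k + 1) (rowDiagram n) lam) =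
      Nat.card (TabPerm (k + 1) (truncate lam)) := by
  classical
  have hsupport : ∀ γ, Nat.card (TabPerm k γ) ≠ 0 → stepWeight γ (truncate lam) ≠ 0 →
      γ ∈ (diagramsOfCard n).image truncate := fun γ hγ hw => by
    have hle : γ.card ≤ k := not_lt.1 fun hlt => hγ (card_tabPerm_eq_zero_of_lt hlt)
    have hrow := rowLen_le_add_one_of_stepWeight_ne_zero hw 0
    rw [rowLen_truncate, zero_add] at hrow
    exact mem_image.2 (exists_truncate_eq (by omega))
  calc Nat.card (KroneckerTableau (k + 1) (rowDiagram n) lam)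
    _ = ∑ ν ∈ diagramsOfCard n, Nat.card (KroneckerTableau k (rowDiagram n) ν) *
          Nat.card {d // IsStep ν lam d} := by
        rw [card_kroneckerTableau_succ, card_rowDiagram]
    _ = ∑ ν ∈ diagramsOfCard n, Nat.card (TabPerm k (truncate ν)) *
          stepWeight (truncate ν) (truncate lam) := sum_congr rfl fun ν hν =>
        card_kroneckerTableau_mul_card_isStep ih (mem_diagramsOfCard.1 hν) hcard hstable
    _ = ∑ γ ∈ (diagramsOfCard n).image truncate,
          Nat.card (TabPerm k γ) * stepWeight γ (truncate lam) :=
        (sum_image (f := fun γ => Nat.card (TabPerm k γ) * stepWeight γ (truncate lam))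
          (truncate_injOn_diagramsOfCard n)).symm
    _ = Nat.card (TabPerm (k + 1) (truncate lam)) := by
        rw [sum_mul_stepWeight _ _ hsupport, card_tabPerm_succ]

end Recursion

/-- Lemma 3.2: for `n ≥ k + λ₂`, the number of Kronecker tableaux of length `k`, initial
shape `(n)` and final shape `λ` equals the number of pairs `(T, π)` where `T` is a partial
standard tableau of shape `λ̄` with labels in `{1, …, k}` and `π` is a permutation of
`{1, …, k}` all of whose non-trivial cycles are decreasing, every fixed point of `π` is a
label of `T`, and every label of `T` is the greatest element of its cycle in `π`. -/
theorem statement2 (n k : ℕ) (hn : 1 ≤ n) (hk : 1 ≤ k) (lam : YoungDiagram)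
    (hcard : lam.card = n) (hstable : k + lam.rowLen 1 ≤ n) :
    Nat.card (KroneckerTableau k (rowDiagram n) lam) = Nat.card (TabPerm k (truncate lam)) := by
  clear hn hk
  induction k generalizing lam with
  | zero => exact card_kroneckerTableau_zero_rowDiagram hcard
  | succ k ih => exact card_kroneckerTableau_succ_of_stable ih hcard hstable

end KroneckerPaper
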